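/- Let G be a finitely generated residually finite group having a solvable subgroup of finite index. Let (G, X, 0) be an expansive pointed dynamical system with the shadowing property (with respect to some finite generating set of G) whose homoclinic points are dense in X. Then every asymptotically nilpotent endomorphism f : X → X of (G, X, 0) is nilpotent. -/

import Mathlib

/-- A group is residually finite if every nontrivial element survives in some finite
quotient. -/
def ResiduallyFinite (H : Type) [Group H] : Prop :=
  ∀ g : H, g ≠ 1 → ∃ (Q : Type) (_ : Group Q) (φ : H →* Q), Finite Q ∧ φ g ≠ 1

/-- A point `x` is homoclinic: `g • x` is eventually close to `x₀` outside finite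
subsets of `G`. -/
def Homoclinic (G : Type) [Group G] {X : Type} [MetricSpace X] [MulAction G X]
    (x₀ x : X) : Prop :=
  ∀ ε : ℝ, 0 < ε → ∃ E : Finset G, ∀ g : G, g ∉ E → dist (g • x) x₀ < ε

/-!
Call `g` active for `x` if `g • x` is visibly away from `0`. By expansivity only `0` has no active
positions, activity spreads at bounded speed under `f`, and by shadowing every point is encoded by
a configuration of a shift of finite type which is nonzero only near the active positions.

The heart of the matter is that a point with finitely many active positions dies out. For a
subgroup `U` consider the configurations which repeat a finite pattern along `U`. If `U` has finite
index, such a configuration has finitely many translates, and it dies out by asymptotic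
nilpotency. One descends from there to the trivial subgroup along the profinite closures of the
derived series of a solvable normal subgroup of finite index. A configuration with a smaller period
group is a limit of configurations with larger ones, and Baire's theorem makes the extinction time
of the latter locally uniform; as a distant pattern cannot be distinguished from an empty
configuration, this confines the activity to finitely many cosets. In a finitely generated abelian
quotient the remaining directions `s` are removed one at a time: copies of a generic pattern along
remote powers of `s` form walls which activity cannot cross.

Superposing a generic configuration which is already dead shows in the same way that late activity
of a point with finitely many active positions is traced back, within a bounded distance, to its
activity at all earlier times. Since some earlier time is quiet near any given position, uniformly
by compactness, and since homoclinic points are dense, all points die out at the same time.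
-/

open Function Set
open Filter (Tendsto atTop)
open scoped Topology Pointwise

section Groups

variable {G ι : Type*} [Group G]

lemma exists_finite_transversal {Q : Set G} (hQ : Q.Finite) (M : Subgroup G) :
    ∃ R : Set G, R.Finite ∧ R * (M : Set G) = Q * M ∧
      ∀ r ∈ R, ∀ r' ∈ R, ∀ m ∈ M, ∀ m' ∈ M, r * m = r' * m' → r = r' := by
  refine ⟨(fun q : G => (q : G ⧸ M).out) '' Q, hQ.image _, ?_, ?_⟩
  · ext g
    simp only [mem_mul, exists_mem_image, SetLike.mem_coe]
    refine exists_congr fun q => and_congr_right fun _ => ?_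
    obtain ⟨m, hm⟩ := QuotientGroup.mk_out_eq_mul M q
    rw [hm]
    constructor
    · rintro ⟨u, hu, rfl⟩
      exact ⟨m * u, mul_mem m.2 hu, (mul_assoc _ _ _).symm⟩
    · rintro ⟨u, hu, rfl⟩
      exact ⟨(m : G)⁻¹ * u, mul_mem (inv_mem m.2) hu, by group⟩
  · rintro _ ⟨q, -, rfl⟩ _ ⟨q', -, rfl⟩ m hm m' hm' h
    have := congrArg (fun g : G => (g : G ⧸ M)) h
    simp only [QuotientGroup.mk_mul_of_mem _ hm, QuotientGroup.mk_mul_of_mem _ hm',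
      QuotientGroup.out_eq'] at this
    exact congrArg Quotient.out this

lemma exists_finite_mul_eq_of_relIndex_ne_zero {V U : Subgroup G} (hVU : V ≤ U)
    (h : V.relIndex U ≠ 0) : ∃ Q : Set G, Q.Finite ∧ Q * (V : Set G) = U := by
  have : (V.subgroupOf U).FiniteIndex := ⟨h⟩
  refine ⟨range fun q : U ⧸ V.subgroupOf U => (q.out : G), finite_range _, ?_⟩
  refine Subset.antisymm ?_ fun u hu => ?_
  · rintro _ ⟨_, ⟨q, rfl⟩, v, hv, rfl⟩
    exact mul_mem q.out.2 (hVU hv)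
  · obtain ⟨v, hv⟩ := QuotientGroup.mk_out_eq_mul (V.subgroupOf U) ⟨u, hu⟩
    refine ⟨_, mem_range_self (QuotientGroup.mk ⟨u, hu⟩), (v : G)⁻¹, inv_mem v.2, ?_⟩
    simp [hv]

lemma exists_inter_subset_iInf_of_directed [Nonempty ι] {V : ι → Subgroup G}
    (hV : Directed (· ≥ ·) V) {T : Set G} (hT : T.Finite) :
    ∃ i, T ∩ V i ⊆ (⨅ j, V j : Subgroup G) := by
  have hescape : ∀ t : G, ∃ i, t ∈ V i → t ∈ ⨅ j, V j := fun t => by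
    by_contra! h
    exact (h (Classical.arbitrary ι)).2 (Subgroup.mem_iInf.2 fun i => (h i).1)
  choose i hi using hescape
  obtain ⟨j, hj⟩ := hV.finite_set_le (hT.image i)
  exact ⟨j, fun t ht => hi t (hj _ (mem_image_of_mem i ht.1) ht.2)⟩

lemma relIndex_ne_zero_of_subset_mul {V U : Subgroup G} {Q : Set G} (hQ : Q.Finite)
    (h : (U : Set G) ⊆ Q * V) : V.relIndex U ≠ 0 := by
  choose q hq v hv hqv using fun u : U => h u.2
  have : Finite Q := hQ
  have hinj : Injective fun x : U ⧸ V.subgroupOf U => (⟨q x.out, hq x.out⟩ : Q) := by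
    intro x y hxy
    rw [← x.out_eq', ← y.out_eq']
    refine QuotientGroup.eq.2 (Subgroup.mem_subgroupOf.2 ?_)
    have : ((x.out⁻¹ * y.out : U) : G) = (v x.out)⁻¹ * v y.out := by
      rw [Subgroup.coe_mul, Subgroup.coe_inv, ← hqv, ← hqv]
      simp only [Subtype.mk.injEq] at hxy
      simp only [hxy, mul_inv_rev, mul_assoc, inv_mul_cancel_left]
    rw [this]
    exact mul_mem (inv_mem (hv _)) (hv _)
  have : Finite (U ⧸ V.subgroupOf U) := Finite.of_injective _ hinj
  exact Subgroup.index_ne_zero_of_finite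

lemma coe_sup_zpowers {U : Subgroup G} {s : G} (hs : s ∈ Subgroup.normalizer (U : Set G)) :
    ((U ⊔ Subgroup.zpowers s : Subgroup G) : Set G) = (Subgroup.zpowers s : Set G) * U := by
  rw [sup_comm, Subgroup.coe_mul_of_left_le_normalizer_right _ _ (by simpa using hs)]

lemma relIndex_sup_zpowers_ne_zero {U V : Subgroup G} {t : G} {p : ℕ}
    (ht : t ∈ Subgroup.normalizer (U : Set G)) (hUV : U ≤ V) (hp : 0 < p) (htp : t ^ p ∈ V) :
    V.relIndex (U ⊔ Subgroup.zpowers t) ≠ 0 := by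
  refine relIndex_ne_zero_of_subset_mul ((finite_Ico (0 : ℤ) p).image fun i => t ^ i) ?_
  rw [coe_sup_zpowers ht]
  rintro _ ⟨_, ⟨i, rfl⟩, v, hv, rfl⟩
  refine ⟨_, ⟨i % p, ⟨i.emod_nonneg (by omega), i.emod_lt_of_pos (by omega)⟩, rfl⟩,
    (t ^ p) ^ (i / p) * v, mul_mem (zpow_mem htp _) (hUV hv), ?_⟩
  change t ^ (i % p) * ((t ^ p) ^ (i / (p : ℤ)) * v) = t ^ i * v
  rw [← mul_assoc, ← zpow_natCast t p, ← zpow_mul, ← zpow_add, Int.emod_add_mul_ediv]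

lemma le_normalizer_of_commutator_le {Q V M : Subgroup G} (hQ : ⁅Q, Q⁆ ≤ M) (hMV : M ≤ V)
    (hVQ : V ≤ Q) : Q ≤ Subgroup.normalizer (V : Set G) :=
  Subgroup.le_normalizer_iff_commutator_le_right.2
    ((Subgroup.commutator_mono le_rfl hVQ).trans (hQ.trans hMV))

lemma relIndex_sup_closure_ne_zero {Q M : Subgroup G} (hQ : ⁅Q, Q⁆ ≤ M) {S : Set G}
    (hS : S.Finite) (hSQ : S ⊆ Q) {V : Subgroup G} (hMV : M ≤ V) (hVQ : V ≤ Q)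
    (hpow : ∀ t ∈ S, ∃ p > 0, t ^ p ∈ V) : V.relIndex (V ⊔ Subgroup.closure S) ≠ 0 := by
  induction S, hS using Set.Finite.induction_on generalizing V with
  | empty => simp [Subgroup.relIndex_self]
  | @insert t S _ _ ih =>
    obtain ⟨htQ, hSQ⟩ := insert_subset_iff.1 hSQ
    obtain ⟨p, hp, htp⟩ := hpow t (mem_insert _ _)
    have hindex := ih hSQ (hMV.trans (le_sup_left (b := Subgroup.zpowers t)))
      (sup_le hVQ (Subgroup.zpowers_le.2 htQ)) fun t' ht' =>
        let ⟨q, hq, hqV⟩ := hpow t' (mem_insert_of_mem _ ht')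
        ⟨q, hq, Subgroup.mem_sup_left hqV⟩
    rw [sup_assoc, Subgroup.zpowers_eq_closure, ← Subgroup.closure_union, singleton_union] at hindex
    refine Subgroup.relIndex_ne_zero_trans ?_ hindex
    rw [← Subgroup.zpowers_eq_closure]
    exact relIndex_sup_zpowers_ne_zero (le_normalizer_of_commutator_le hQ hMV hVQ htQ) le_rfl hp htp

lemma mul_inter_mul_subset {Q L : Subgroup G} (hQL : Q ≤ L) {B C : Set G}
    (h : (B⁻¹ * C) ∩ L ⊆ Q) : (B * (L : Set G)) ∩ (C * Q) ⊆ B * Q := by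
  rintro _ ⟨⟨b, hb, l, hl, rfl⟩, c, hc, q, hq, e⟩
  have hbc : b⁻¹ * c = l * q⁻¹ := by
    rw [eq_mul_inv_iff_mul_eq, mul_assoc, show c * q = b * l from e, inv_mul_cancel_left]
  refine ⟨b, hb, l, ?_, rfl⟩
  rw [← inv_mul_cancel_right l q, ← hbc]
  refine mul_mem (h ⟨mul_mem_mul (inv_mem_inv.2 hb) hc, ?_⟩) hq
  rw [hbc]
  exact mul_mem hl (inv_mem (hQL hq))

end Groups

section Configurations

variable {G α : Type*}

/-- The pointwise limits of the configurations in `𝒩`, for the discrete topology on `α`. -/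
def localClosure (𝒩 : Set (G → α)) : Set (G → α) :=
  {c | ∀ F : Set G, F.Finite → ∃ c' ∈ 𝒩, EqOn c' c F}

section Superposition

variable [Zero α]

open Classical in
/-- The superposition of two configurations; `c` has priority where both are nonzero. -/
noncomputable def superpose (c c' : G → α) : G → α := fun g => if c g = 0 then c' g else c g

lemma superpose_of_eq_zero {c : G → α} (c' : G → α) {g : G} (h : c g = 0) :
    superpose c c' g = c' g :=
  if_pos h

lemma superpose_of_right_eq_zero (c : G → α) {c' : G → α} {g : G} (h : c' g = 0) :
    superpose c c' g = c g := by
  by_cases hc : c g = 0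
  · rw [superpose_of_eq_zero c' hc, h, hc]
  · exact if_neg hc

lemma support_superpose (c c' : G → α) : support (superpose c c') = support c ∪ support c' := by
  ext g
  by_cases h : c g = 0 <;> simp [superpose, h]

end Superposition

variable [Group G]

/-- The right translate by `k` of a configuration. The dynamics and all local rules look at a
configuration through left multiplication, so they commute with these translations. -/
def shift (k : G) (c : G → α) : G → α := fun g => c (g * k)

/-- Invariance of a configuration under right translation by the elements of `U`. -/
def IsPeriodic (U : Subgroup G) (c : G → α) : Prop := ∀ u ∈ U, shift u c = c

lemma IsPeriodic.apply_mul {U : Subgroup G} {c : G → α} (h : IsPeriodic U c) (g : G) {u : G}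
    (hu : u ∈ U) : c (g * u) = c g :=
  congrFun (h u hu) g

lemma IsPeriodic.shift {U : Subgroup G} {c : G → α} (h : IsPeriodic U c) {k : G}
    (hk : k ∈ Subgroup.normalizer (U : Set G)) : IsPeriodic U (shift k c) := by
  intro u hu
  funext g
  have := h.apply_mul (g * k) ((Subgroup.mem_normalizer_iff''.1 hk u).1 hu)
  simpa only [_root_.shift, mul_assoc, mul_inv_cancel_left] using this

variable [Zero α]

lemma IsPeriodic.superpose {U : Subgroup G} {c c' : G → α} (h : IsPeriodic U c)
    (h' : IsPeriodic U c') : IsPeriodic U (superpose c c') := by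
  intro u hu
  funext g
  classical exact if_congr (by rw [h.apply_mul g hu]) (h'.apply_mul g hu) (h.apply_mul g hu)

lemma support_shift (k : G) (c : G → α) : support (shift k c) = support c * {k⁻¹} := by
  ext g
  simp [shift]

/-- The translates `A * {v}`, `v ∈ V`, are so far apart that no translate by an element of `K`
of one of them meets another one. -/
def Separated (K A V : Set G) : Prop :=
  ∀ k ∈ K, ∀ a ∈ A, ∀ a' ∈ A, ∀ v ∈ V, ∀ v' ∈ V, k * a * v = a' * v' → v = v'

lemma Separated.mono {K A V W : Set G} (h : Separated K A W) (hVW : V ⊆ W) : Separated K A V :=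
  fun k hk a ha a' ha' v hv v' hv' => h k hk a ha a' ha' v (hVW hv) v' (hVW hv')

open Classical in
/-- Copies of the pattern that `c` shows on `A`, pasted at the places `A * {v}`, `v ∈ V`. The
choice of `v` is immaterial if these places are disjoint. -/
noncomputable def copies (c : G → α) (A V : Set G) : G → α := fun g =>
  if h : ∃ v ∈ V, g * v⁻¹ ∈ A then c (g * h.choose⁻¹) else 0

lemma copies_apply {K A V : Set G} (h : Separated K A V) (hK : 1 ∈ K) (c : G → α) {a v : G}
    (ha : a ∈ A) (hv : v ∈ V) : copies c A V (a * v) = c a := by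
  have hex : ∃ v' ∈ V, a * v * v'⁻¹ ∈ A := ⟨v, hv, by simpa using ha⟩
  obtain ⟨hmem, hA⟩ := hex.choose_spec
  have heq : v = hex.choose := h 1 hK a ha _ hA v hv _ hmem (by simp)
  rw [copies, dif_pos hex, ← heq, mul_inv_cancel_right]

lemma copies_of_notMem {A V : Set G} (c : G → α) {g : G} (hg : g ∉ A * V) :
    copies c A V g = 0 :=
  dif_neg fun ⟨v, hv, ha⟩ => hg ⟨_, ha, v, hv, inv_mul_cancel_right g v⟩

open Classical in
lemma copies_congr {A V W : Set G} (c : G → α) {g : G}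
    (h : ∀ v, g * v⁻¹ ∈ A → (v ∈ V ↔ v ∈ W)) : copies c A V g = copies c A W g := by
  have : (fun v => v ∈ V ∧ g * v⁻¹ ∈ A) = fun v => v ∈ W ∧ g * v⁻¹ ∈ A :=
    funext fun v => propext (and_congr_left (h v))
  exact congrArg (fun P : G → Prop => if h : ∃ v, P v then c (g * h.choose⁻¹) else 0) this

lemma support_copies {K A V : Set G} (h : Separated K A V) (hK : 1 ∈ K) {c : G → α}
    (hc : A ⊆ support c) : support (copies c A V) = A * V := by
  refine Subset.antisymm (fun g hg => by_contra fun h' => hg (copies_of_notMem c h')) ?_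
  rintro _ ⟨a, ha, v, hv, rfl⟩
  simpa only [mem_support, copies_apply h hK c ha hv] using hc ha

end Configurations

/-- A set of admissible configurations containing the empty one, invariant under right
translations, and cut out by a local rule which is checked on the finite windows `window * {g}`. -/
structure FiniteTypeShift (G α : Type*) [Group G] [Zero α] where
  adm : Set (G → α)
  window : Set G
  finite_window : window.Finite
  one_mem_window : 1 ∈ window
  zero_mem : 0 ∈ adm
  shift_mem : ∀ k : G, ∀ c ∈ adm, shift k c ∈ adm
  glue : ∀ x : G → α, (∀ g, ∃ c ∈ adm, ∀ w ∈ window, x (w * g) = c (w * g)) → x ∈ adm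

namespace FiniteTypeShift

variable {G α : Type*} [Group G] [Zero α] (Y : FiniteTypeShift G α)

/-- The positions whose windows overlap that of the identity. -/
def collar : Set G := Y.window * Y.window⁻¹

/-- No window sees both configurations. -/
def Apart (c c' : G → α) : Prop := Disjoint (Y.collar * support c) (support c')

/-- `c` is the `U`-periodic configuration made of separated translates of its pattern on the
finite set `A`. -/
structure IsCell (c : G → α) (U : Subgroup G) (A : Set G) : Prop where
  finite : A.Finite
  periodic : IsPeriodic U c
  support_eq : support c = A * U
  separated : Separated Y.collar A U

/-- The admissible configurations supported in `B` which repeat a finite pattern along `U`. -/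
def periodizations (U : Subgroup G) (B : Set G) : Set (G → α) :=
  {c | c ∈ Y.adm ∧ (∃ A, Y.IsCell c U A) ∧ support c ⊆ B}

variable {Y} {c c' : G → α} {U M : Subgroup G} {A B : Set G}

lemma periodizations_mono {B' : Set G} (h : B ⊆ B') :
    Y.periodizations U B ⊆ Y.periodizations U B' := fun _ hc => ⟨hc.1, hc.2.1, hc.2.2.trans h⟩

lemma finite_collar : Y.collar.Finite := Y.finite_window.mul Y.finite_window.inv

lemma mul_inv_mem_collar {v w : G} (hv : v ∈ Y.window) (hw : w ∈ Y.window) :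
    v * w⁻¹ ∈ Y.collar :=
  mul_mem_mul hv (inv_mem_inv.2 hw)

lemma one_mem_collar : 1 ∈ Y.collar := by
  simpa using mul_inv_mem_collar Y.one_mem_window Y.one_mem_window

lemma inv_mem_collar {k : G} (hk : k ∈ Y.collar) : k⁻¹ ∈ Y.collar := by
  obtain ⟨v, hv, w, hw, rfl⟩ := hk
  simpa using mul_inv_mem_collar (mem_inv.1 hw) hv

lemma superpose_mem_adm (hc : c ∈ Y.adm) (hc' : c' ∈ Y.adm) (h : Y.Apart c c') :
    superpose c c' ∈ Y.adm := by
  refine Y.glue _ fun g => ?_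
  by_cases hg : ∃ w ∈ Y.window, c (w * g) ≠ 0
  · obtain ⟨w, hw, hcw⟩ := hg
    refine ⟨c, hc, fun v hv => superpose_of_right_eq_zero c (notMem_support.1 ?_)⟩
    have := mul_mem_mul (mul_inv_mem_collar hv hw) (mem_support.2 hcw)
    rw [mul_assoc, inv_mul_cancel_left] at this
    exact disjoint_left.1 h this
  · push Not at hg
    exact ⟨c', hc', fun v hv => superpose_of_eq_zero c' (hg v hv)⟩

lemma IsCell.subset_support (h : Y.IsCell c U A) : A ⊆ support c := by
  rw [h.support_eq]
  exact fun a ha => ⟨a, ha, 1, one_mem U, mul_one a⟩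

lemma IsCell.eq_one_of_mul_eq (h : Y.IsCell c U A) {k a a' u : G} (hk : k ∈ Y.collar)
    (ha : a ∈ A) (ha' : a' ∈ A) (hu : u ∈ U) (e : k * a = a' * u) : u = 1 :=
  (h.separated k hk a ha a' ha' 1 (one_mem U) u hu (by rw [mul_one, e])).symm

lemma IsCell.copies_self (h : Y.IsCell c U A) : copies c A U = c := by
  funext g
  by_cases hg : g ∈ A * (U : Set G)
  · obtain ⟨a, ha, u, hu, rfl⟩ := hg
    rw [copies_apply h.separated one_mem_collar c ha hu, h.periodic.apply_mul a hu]
  · rw [copies_of_notMem c hg]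
    rw [← h.support_eq] at hg
    exact (notMem_support.1 hg).symm

lemma IsCell.copies_mem_adm (h : Y.IsCell c U A) (hc : c ∈ Y.adm) {V : Set G}
    (hV : Separated Y.collar A V) : copies c A V ∈ Y.adm := by
  refine Y.glue _ fun g => ?_
  by_cases hg : ∃ w ∈ Y.window, w * g ∈ A * V
  · obtain ⟨w, hw, a, ha, v, hv, hav⟩ := hg
    refine ⟨shift v⁻¹ c, Y.shift_mem _ c hc, fun w' hw' => ?_⟩
    have hk := mul_inv_mem_collar hw' hw
    have hwg : w' * w⁻¹ * a * v = w' * g := by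
      rw [mul_assoc _ a, show a * v = w * g from hav]; group
    by_cases hg' : w' * g ∈ A * V
    · obtain ⟨a', ha', v', hv', hav'⟩ := hg'
      obtain rfl := hV _ hk a ha a' ha' v hv v' hv' (hwg.trans hav'.symm)
      rw [← show a' * v = w' * g from hav', copies_apply hV one_mem_collar c ha' hv, shift,
        mul_inv_cancel_right]
    · rw [copies_of_notMem c hg']
      by_contra hne
      have hsupp : w' * g * v⁻¹ ∈ support c := Ne.symm hne
      rw [h.support_eq] at hsupp
      obtain ⟨a', ha', u, hu, hau⟩ := hsupp
      obtain rfl := h.eq_one_of_mul_eq hk ha ha' hu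
        (by rw [show a' * u = w' * g * v⁻¹ from hau, ← hwg, mul_inv_cancel_right])
      exact hg' ⟨a', ha', v, hv, by simpa [eq_mul_inv_iff_mul_eq] using hau⟩
  · push Not at hg
    exact ⟨0, Y.zero_mem, fun w hw => copies_of_notMem c (hg w hw)⟩

lemma IsCell.exists_isCell_copies (h : Y.IsCell c U A) {Q : Set G} (hQ : Q.Finite)
    (hQM : Separated Y.collar A (Q * M)) : ∃ A', Y.IsCell (copies c A (Q * M)) M A' := by
  obtain ⟨R, hR, hRM, hRinj⟩ := exists_finite_transversal hQ M
  rw [← hRM] at hQM ⊢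
  refine ⟨A * R, h.finite.mul hR, fun m hm => funext fun g => ?_, ?_, ?_⟩
  · by_cases hg : g ∈ A * (R * (M : Set G))
    · obtain ⟨a, ha, _, ⟨r, hr, m', hm', rfl⟩, rfl⟩ := hg
      rw [copies_apply hQM one_mem_collar c ha (mul_mem_mul hr hm')]
      simpa only [shift, mul_assoc] using copies_apply hQM one_mem_collar c ha
        (mul_mem_mul hr (mul_mem hm' hm))
    · rw [copies_of_notMem c hg]
      refine copies_of_notMem c fun ⟨a, ha, _, ⟨r, hr, m', hm', rfl⟩, hg'⟩ => hg ?_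
      refine ⟨a, ha, _, mul_mem_mul hr (mul_mem hm' (inv_mem hm)), ?_⟩
      simpa only [mul_assoc] using mul_inv_eq_iff_eq_mul.2 hg'
  · rw [support_copies hQM one_mem_collar h.subset_support, mul_assoc]
  · rintro k hk _ ⟨a, ha, r, hr, rfl⟩ _ ⟨a', ha', r', hr', rfl⟩ m hm m' hm' e
    have hrm := hQM k hk a ha a' ha' _ (mul_mem_mul hr hm) _ (mul_mem_mul hr' hm')
      (by simpa only [mul_assoc] using e)
    rw [hRinj r hr r' hr' m hm m' hm' hrm] at hrm
    exact mul_left_cancel hrm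

lemma zero_mem_periodizations (U : Subgroup G) (B : Set G) : 0 ∈ Y.periodizations U B :=
  ⟨Y.zero_mem, ⟨∅, finite_empty, fun _ _ => rfl, by simp, fun _ _ _ ha => ha.elim⟩, by simp⟩

lemma shift_mem_periodizations (hc : c ∈ Y.periodizations U B) {k : G}
    (hk : k ∈ Subgroup.normalizer (U : Set G)) : shift k c ∈ Y.periodizations U (B * {k⁻¹}) := by
  obtain ⟨hadm, ⟨A, hA⟩, hB⟩ := hc
  refine ⟨Y.shift_mem k c hadm, ⟨A * {k⁻¹}, hA.finite.mul (finite_singleton _),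
    hA.periodic.shift hk, ?_, ?_⟩, (support_shift k c).trans_subset (mul_subset_mul_right hB)⟩
  · rw [support_shift, hA.support_eq, mul_assoc, mul_assoc,
      Subgroup.set_mul_normalizer_comm _ _ (by simpa using inv_mem hk)]
  · rintro κ hκ _ ⟨a, ha, _, rfl, rfl⟩ _ ⟨a', ha', _, rfl, rfl⟩ u hu v hv e
    have hconj : ∀ {u}, u ∈ U → k⁻¹ * u * k ∈ U := (Subgroup.mem_normalizer_iff''.1 hk _).1
    have := hA.separated κ hκ a ha a' ha' _ (hconj hu) _ (hconj hv)
      (by simpa [mul_assoc] using congrArg (· * k) e)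
    simpa using this

lemma superpose_mem_periodizations (hc : c ∈ Y.periodizations U B)
    (hc' : c' ∈ Y.periodizations U B) (h : Y.Apart c c') :
    superpose c c' ∈ Y.periodizations U B := by
  obtain ⟨hadm, ⟨A, hA⟩, hB⟩ := hc
  obtain ⟨hadm', ⟨A', hA'⟩, hB'⟩ := hc'
  refine ⟨superpose_mem_adm hadm hadm' h, ⟨A ∪ A', hA.finite.union hA'.finite,
    hA.periodic.superpose hA'.periodic, ?_, ?_⟩, ?_⟩
  · rw [support_superpose, hA.support_eq, hA'.support_eq, union_mul]
  · have hfar : ∀ k ∈ Y.collar, ∀ a ∈ A, ∀ a' ∈ A', ∀ u ∈ U, ∀ u' ∈ U,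
        k * a * u ≠ a' * u' := fun k hk a ha a' ha' u hu u' hu' e => by
      refine disjoint_left.1 h (mul_mem_mul hk (hA.support_eq ▸ mul_mem_mul ha hu)) ?_
      rw [hA'.support_eq, ← mul_assoc, e]
      exact mul_mem_mul ha' hu'
    rintro k hk a (ha | ha) a' (ha' | ha') u hu u' hu' e
    · exact hA.separated k hk a ha a' ha' u hu u' hu' e
    · exact (hfar k hk a ha a' ha' u hu u' hu' e).elim
    · refine (hfar k⁻¹ (inv_mem_collar hk) a' ha' a ha u' hu' u hu ?_).elim
      rw [mul_assoc, ← e]; group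
    · exact hA'.separated k hk a ha a' ha' u hu u' hu' e
  · rw [support_superpose]
    exact union_subset hB hB'

lemma exists_mem_periodizations_eqOn_of_le (hc : c ∈ Y.periodizations U B) (hM : M ≤ U)
    {F : Set G} (hF : F.Finite) :
    ∃ c' ∈ Y.periodizations M B, EqOn c' c F ∧ support c' ⊆ support c := by
  obtain ⟨hadm, ⟨A, hA⟩, hB⟩ := hc
  set Q : Set G := U ∩ (A⁻¹ * F)
  have hQM : Q * (M : Set G) ⊆ U :=
    mul_subset_iff.2 fun q hq m hm => mul_mem hq.1 (hM hm)
  have hsep := hA.separated.mono hQM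
  have hsupp : support (copies c A (Q * M)) ⊆ support c := by
    rw [support_copies hsep one_mem_collar hA.subset_support, hA.support_eq]
    exact mul_subset_mul_left hQM
  refine ⟨copies c A (Q * M), ⟨hA.copies_mem_adm hadm hsep,
    hA.exists_isCell_copies ((hA.finite.inv.mul hF).inter_of_right _) hsep, hsupp.trans hB⟩,
    fun g hg => ?_, hsupp⟩
  rw [← congrFun hA.copies_self g]
  refine copies_congr c fun v hv => ⟨fun h => hQM h, fun h => ⟨v, ⟨h, ?_⟩, 1, one_mem M, by simp⟩⟩
  exact ⟨_, inv_mem_inv.2 hv, g, hg, by group⟩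

lemma periodizations_subset_localClosure (hM : M ≤ U) :
    Y.periodizations U B ⊆ localClosure (Y.periodizations M B) := fun _ hc _ hF =>
  let ⟨c', hc', heq, _⟩ := exists_mem_periodizations_eqOn_of_le hc hM hF
  ⟨c', hc', heq⟩

lemma periodizations_subset_of_relIndex_ne_zero (hM : M ≤ U) (h : M.relIndex U ≠ 0) :
    Y.periodizations U B ⊆ Y.periodizations M B := by
  rintro c ⟨hadm, ⟨A, hA⟩, hB⟩
  obtain ⟨Q, hQ, hQM⟩ := exists_finite_mul_eq_of_relIndex_ne_zero hM h
  have := hA.exists_isCell_copies (M := M) hQ (hQM ▸ hA.separated)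
  rw [hQM, hA.copies_self] at this
  exact ⟨hadm, this, hB⟩

lemma exists_mem_periodizations_eqOn_of_directed {ι : Type*} [Nonempty ι] {V : ι → Subgroup G}
    (hV : Directed (· ≥ ·) V) (hc : c ∈ Y.periodizations (⨅ i, V i) B) {F : Set G}
    (hF : F.Finite) : ∃ i, ∃ c' ∈ Y.periodizations (V i) (support c * V i), EqOn c' c F := by
  obtain ⟨hadm, ⟨A, hA⟩, -⟩ := hc
  obtain ⟨i, hi⟩ := exists_inter_subset_iInf_of_directed hV
    (T := A⁻¹ * Y.collar * A ∪ A⁻¹ * F)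
    (((hA.finite.inv.mul finite_collar).mul hA.finite).union (hA.finite.inv.mul hF))
  have hsep : Separated Y.collar A (V i) := fun k hk a ha a' ha' v hv v' hv' e => by
    have hvv : a'⁻¹ * k * a = v' * v⁻¹ := by
      rw [mul_assoc, inv_mul_eq_iff_eq_mul, ← mul_assoc, ← e, mul_inv_cancel_right]
    refine (mul_inv_eq_one.1 (hA.eq_one_of_mul_eq hk ha ha' (hi ⟨Or.inl ?_, ?_⟩) ?_)).symm
    · rw [← hvv]; exact mul_mem_mul (mul_mem_mul (inv_mem_inv.2 ha') hk) ha
    · exact mul_mem hv' (inv_mem hv)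
    · rw [← hvv]; group
  have hcell := hA.exists_isCell_copies (M := V i) (finite_singleton 1)
    (by rwa [singleton_mul, image_congr fun a _ => one_mul a, image_id'])
  rw [singleton_mul, image_congr fun a _ => one_mul a, image_id'] at hcell
  refine ⟨i, copies c A (V i), ⟨hA.copies_mem_adm hadm hsep, hcell, ?_⟩, fun g hg => ?_⟩
  · rw [support_copies hsep one_mem_collar hA.subset_support]
    exact mul_subset_mul_right hA.subset_support
  · rw [← congrFun hA.copies_self g]
    refine copies_congr c fun v hv => ⟨fun h => hi ⟨Or.inr ?_, h⟩, fun h => ?_⟩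
    · exact ⟨_, inv_mem_inv.2 hv, g, hg, by group⟩
    · exact Subgroup.mem_iInf.1 h i

end FiniteTypeShift

section ExpansiveSystems

variable {G X : Type*} [Group G] [MetricSpace X] [MulAction G X]

lemma exists_finite_dist_lt_of_expansive [CompactSpace X] [ContinuousConstSMul G X] {Δ : ℝ}
    (hexp : ∀ x y : X, (∀ g : G, dist (g • x) (g • y) ≤ Δ) → x = y) {η : ℝ} (hη : 0 < η) :
    ∃ F : Set G, F.Finite ∧
      ∀ x y : X, (∀ g ∈ F, dist (g • x) (g • y) ≤ Δ) → dist x y < η := by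
  have hclosed : ∀ g : G, IsClosed {p : X × X | dist (g • p.1) (g • p.2) ≤ Δ} := fun g =>
    isClosed_le (by fun_prop) continuous_const
  have hcompact : IsCompact {p : X × X | η ≤ dist p.1 p.2} :=
    (isClosed_le continuous_const continuous_dist).isCompact
  obtain ⟨F, hF⟩ := hcompact.elim_finite_subfamily_closed _ hclosed (by
    refine eq_empty_of_forall_notMem fun p ⟨hp, hp'⟩ => ?_
    have hpos : 0 < dist p.1 p.2 := hη.trans_le hp
    exact dist_pos.1 hpos (hexp p.1 p.2 fun g => mem_iInter.1 hp' g))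
  refine ⟨F, F.finite_toSet, fun x y hxy => ?_⟩
  by_contra! hge
  exact (hF.subset (show (x, y) ∈ _ from ⟨hge, mem_iInter₂.2 hxy⟩)).elim

variable [Zero X]

/-- The positions at which the orbit of `x` is visibly away from `0`. -/
def activeSet (G : Type*) [Group G] [MulAction G X] (Δ : ℝ) (x : X) : Set G :=
  {g | Δ / 2 < dist (g • x) 0}

/-- `f` is an asymptotically nilpotent endomorphism of the expansive system `(G, X, 0)`, with
expansivity constant `Δ`. -/
structure IsAsymptoticallyNilpotent (G : Type*) [Group G] [MulAction G X] (Δ : ℝ) (f : X → X) :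
    Prop where
  pos : 0 < Δ
  smul_zero : ∀ g : G, g • (0 : X) = 0
  expansive : ∀ x y : X, (∀ g : G, dist (g • x) (g • y) ≤ Δ) → x = y
  continuous : Continuous f
  map_zero : f 0 = 0
  map_smul : ∀ (g : G) (x : X), f (g • x) = g • f x
  tendsto : ∀ x : X, Tendsto (fun n => f^[n] x) atTop (𝓝 0)

variable {Δ : ℝ} {f : X → X} {x : X}

lemma mem_activeSet {g : G} : g ∈ activeSet G Δ x ↔ Δ / 2 < dist (g • x) 0 := Iff.rfl

lemma notMem_activeSet {g : G} : g ∉ activeSet G Δ x ↔ dist (g • x) 0 ≤ Δ / 2 := by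
  rw [mem_activeSet, not_lt]

lemma mem_activeSet_smul {g k : G} : g ∈ activeSet G Δ (k • x) ↔ g * k ∈ activeSet G Δ x := by
  rw [mem_activeSet, mem_activeSet, mul_smul]

namespace IsAsymptoticallyNilpotent

variable (h : IsAsymptoticallyNilpotent G Δ f)
include h

lemma activeSet_eq_empty_iff : activeSet G Δ x = ∅ ↔ x = 0 := by
  constructor
  · intro hx
    refine h.expansive x 0 fun g => ?_
    have := notMem_activeSet.1 (eq_empty_iff_forall_notMem.1 hx g)
    rw [h.smul_zero]
    linarith [h.pos]
  · rintro rfl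
    refine eq_empty_of_forall_notMem fun g hg => ?_
    rw [mem_activeSet, h.smul_zero, dist_self] at hg
    linarith [h.pos]

lemma iterate_zero (n : ℕ) : f^[n] 0 = 0 := iterate_fixed h.map_zero n

lemma iterate_smul (n : ℕ) (g : G) (x : X) : f^[n] (g • x) = g • f^[n] x :=
  (show Function.Commute f (g • ·) from h.map_smul g).iterate_left n x

lemma iterate_eq_zero_of_le {m n : ℕ} (hmn : m ≤ n) (hx : f^[m] x = 0) : f^[n] x = 0 := by
  rw [← Nat.sub_add_cancel hmn, iterate_add_apply, hx, h.iterate_zero]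

variable [ContinuousConstSMul G X]

lemma eventually_notMem_activeSet (x : X) (g : G) :
    ∀ᶠ n in atTop, g ∉ activeSet G Δ (f^[n] x) := by
  have hlim : Tendsto (fun n => dist (g • f^[n] x) 0) atTop (𝓝 0) := by
    have := (((h.tendsto x).const_smul g).dist (tendsto_const_nhds (x := (0 : X))))
    rwa [h.smul_zero, dist_self] at this
  filter_upwards [hlim.eventually_lt_const (half_pos h.pos)] with n hn using not_lt.2 hn.le

lemma isClosed_forall_notMem_activeSet (D : Set G) (k : ℕ) :
    IsClosed {x : X | ∀ n ≥ k, Disjoint D (activeSet G Δ (f^[n] x))} := by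
  simp only [disjoint_left, notMem_activeSet, ofPred_forall]
  refine isClosed_iInter fun n => isClosed_iInter fun _ => isClosed_iInter fun d =>
    isClosed_iInter fun _ => isClosed_le ?_ continuous_const
  exact (((h.continuous.iterate n).const_smul d).dist continuous_const)

variable [CompactSpace X]

lemma exists_finite_dist_smul_lt {η : ℝ} (hη : 0 < η) :
    ∃ F : Set G, F.Finite ∧ ∀ x : X, ∀ g ∉ F * activeSet G Δ x, dist (g • x) 0 < η := by
  obtain ⟨F, hF, hFη⟩ := exists_finite_dist_lt_of_expansive h.expansive hη
  refine ⟨F⁻¹, hF.inv, fun x g hg => hFη (g • x) 0 fun k hk => ?_⟩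
  have hkg : k * g ∉ activeSet G Δ x := fun hkg =>
    hg ⟨k⁻¹, inv_mem_inv.2 hk, k * g, hkg, inv_mul_cancel_left k g⟩
  rw [notMem_activeSet, mul_smul] at hkg
  rw [h.smul_zero]
  linarith [h.pos]

lemma exists_finite_activeSet_map_subset :
    ∃ F : Set G, F.Finite ∧ ∀ x, activeSet G Δ (f x) ⊆ F * activeSet G Δ x := by
  obtain ⟨η, hη, hfη⟩ := Metric.continuousAt_iff.1 h.continuous.continuousAt _ (half_pos h.pos)
  obtain ⟨F, hF, hFη⟩ := h.exists_finite_dist_smul_lt hη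
  refine ⟨F, hF, fun x g hg => by_contra fun hgF => ?_⟩
  have hsmall := hfη (hFη x g hgF)
  rw [h.map_zero, h.map_smul] at hsmall
  exact lt_asymm hg hsmall

lemma exists_forall_exists_disjoint_activeSet {E : Set G} (hE : E.Finite) :
    ∃ n, ∀ x, ∃ j ≤ n, Disjoint E (activeSet G Δ (f^[j] x)) := by
  let C (j : ℕ) : Set X := {x | ∀ e ∈ E, dist (e • f^[j] x) 0 < Δ / 2}
  have hC (j : ℕ) : IsOpen (C j) := by
    simp only [C, ofPred_forall]
    exact hE.isOpen_biInter fun e _ => isOpen_lt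
      (((h.continuous.iterate j).const_smul e).dist continuous_const) continuous_const
  have hcover : univ ⊆ ⋃ j, C j := fun x _ => by
    have hlim (e : G) : ∀ᶠ j in atTop, dist (e • f^[j] x) 0 < Δ / 2 := by
      simpa only [h.iterate_smul] using
        (h.tendsto (e • x)).eventually (Metric.ball_mem_nhds 0 (half_pos h.pos))
    exact mem_iUnion.2 ((Filter.eventually_all_finite hE).2 fun e _ => hlim e).exists
  obtain ⟨J, hJ⟩ := isCompact_univ.elim_finite_subcover C hC hcover
  refine ⟨J.sup id, fun x => ?_⟩
  obtain ⟨j, hjJ, hj⟩ := mem_iUnion₂.1 (hJ (mem_univ x))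
  exact ⟨j, Finset.le_sup (f := id) hjJ, disjoint_left.2 fun e he => not_lt.2 (hj e he).le⟩

/-- By Baire's theorem, some ball of `closure Z` lies in one of the closed sets of points which
are inactive in `D` from time `k` on. -/
lemma exists_ball_forall_disjoint {Z : Set X} (hZ : Z.Nonempty) {D : Set G} (hD : D.Finite) :
    ∃ z ∈ Z, ∃ r > 0, ∃ k, ∀ x ∈ Z, dist x z < r →
      ∀ n ≥ k, Disjoint D (activeSet G Δ (f^[n] x)) := by
  have : CompactSpace (closure Z) := isCompact_iff_compactSpace.1 isClosed_closure.isCompact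
  have : Nonempty (closure Z) := hZ.closure.to_subtype
  set C : ℕ → Set (closure Z) := fun k =>
    (↑) ⁻¹' {x : X | ∀ n ≥ k, Disjoint D (activeSet G Δ (f^[n] x))}
  have hCcover : ⋃ k, C k = univ := by
    refine eq_univ_of_forall fun x => mem_iUnion.2 ?_
    obtain ⟨k, hk⟩ := Filter.eventually_atTop.1
      ((Filter.eventually_all_finite hD).2 fun d _ => h.eventually_notMem_activeSet (x : X) d)
    exact ⟨k, fun n hn => disjoint_left.2 (hk n hn)⟩
  obtain ⟨k, hk⟩ := nonempty_interior_of_iUnion_of_closed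
    (fun k => (h.isClosed_forall_notMem_activeSet D k).preimage continuous_subtype_val)
    hCcover
  have hdense : Dense ((↑) ⁻¹' Z : Set (closure Z)) := Subtype.dense_iff.2 (by
    rw [Subtype.image_preimage_coe, inter_eq_right.2 subset_closure])
  obtain ⟨z, hzk, hz⟩ := hdense.inter_open_nonempty _ isOpen_interior hk
  obtain ⟨r, hr, hball⟩ := Metric.isOpen_iff.1 isOpen_interior z hzk
  exact ⟨z, hz, r, hr, k, fun x hx hxz =>
    interior_subset (hball (show (⟨x, subset_closure hx⟩ : closure Z) ∈ _ from hxz))⟩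

end IsAsymptoticallyNilpotent

end ExpansiveSystems

/-- A model of the system `(G, X, 0)` by the configurations of a shift of finite type. Decoding is
equivariant and uniformly continuous; `encode` is an equivariant section of it which is
nonzero only near active positions. -/
structure SymbolicModel (G α : Type*) [Group G] [Zero α] {X : Type*} [MetricSpace X] [Zero X]
    [MulAction G X] (Δ : ℝ) (f : X → X) extends FiniteTypeShift G α where
  endo : IsAsymptoticallyNilpotent G Δ f
  decode : (G → α) → X
  decode_shift : ∀ c ∈ adm, ∀ k, decode (shift k c) = k • decode c
  exists_finite_dist_decode_lt : ∀ η > 0, ∃ F : Set G, F.Finite ∧ ∀ c ∈ adm, ∀ c' ∈ adm,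
    EqOn c c' F → dist (decode c) (decode c') < η
  encode : X → G → α
  encode_mem : ∀ x, encode x ∈ adm
  decode_encode : ∀ x, decode (encode x) = x
  encode_smul : ∀ k x, encode (k • x) = shift k (encode x)
  radius : Set G
  finite_radius : radius.Finite
  support_encode_subset : ∀ x, support (encode x) ⊆ radius * activeSet G Δ x

namespace SymbolicModel

variable {G α X : Type*} [Group G] [Zero α] [MetricSpace X] [Zero X] [MulAction G X]
  {Δ : ℝ} {f : X → X} (Y : SymbolicModel G α Δ f)

/-- The active positions, at time `n`, of the point encoded by `c`. -/
def act (n : ℕ) (c : G → α) : Set G := activeSet G Δ (f^[n] (Y.decode c))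

/-- The orbit of the point encoded by `c` dies out completely. -/
def Nilpotent (c : G → α) : Prop := ∃ n, Y.act n c = ∅

/-- A code of the point reached at time `T` from the point encoded by `c`. -/
def recode (T : ℕ) (c : G → α) : G → α := Y.encode (f^[T] (Y.decode c))

variable {Y} {c c' : G → α} {U : Subgroup G}

lemma mem_act_shift (hc : c ∈ Y.adm) (n : ℕ) {g k : G} :
    g ∈ Y.act n (shift k c) ↔ g * k ∈ Y.act n c := by
  rw [act, Y.decode_shift c hc, Y.endo.iterate_smul, mem_activeSet_smul, act]

lemma mem_act_mul (hc : c ∈ Y.adm) (hU : IsPeriodic U c) (n : ℕ) {g u : G} (hu : u ∈ U) :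
    g * u ∈ Y.act n c ↔ g ∈ Y.act n c := by
  rw [← mem_act_shift hc, hU u hu]

lemma act_eq_empty_iff {n : ℕ} : Y.act n c = ∅ ↔ f^[n] (Y.decode c) = 0 :=
  Y.endo.activeSet_eq_empty_iff

lemma act_eq_empty_of_le {m n : ℕ} (hmn : m ≤ n) (h : Y.act m c = ∅) : Y.act n c = ∅ :=
  act_eq_empty_iff.2 (Y.endo.iterate_eq_zero_of_le hmn (act_eq_empty_iff.1 h))

lemma decode_zero : Y.decode 0 = 0 := by
  have hencode : Y.encode 0 = 0 := by
    rw [← support_eq_empty_iff, ← subset_empty_iff]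
    simpa [Y.endo.activeSet_eq_empty_iff.2 rfl] using Y.support_encode_subset 0
  rw [← hencode, Y.decode_encode]

lemma act_zero (n : ℕ) : Y.act n 0 = ∅ := by
  rw [act_eq_empty_iff, decode_zero, Y.endo.iterate_zero]

lemma recode_mem (T : ℕ) (c : G → α) : Y.recode T c ∈ Y.adm := Y.encode_mem _

lemma support_recode_subset (T : ℕ) (c : G → α) :
    support (Y.recode T c) ⊆ Y.radius * Y.act T c :=
  Y.support_encode_subset _

lemma act_recode (n T : ℕ) (c : G → α) : Y.act n (Y.recode T c) = Y.act (n + T) c := by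
  rw [act, recode, Y.decode_encode, ← iterate_add_apply, act]

lemma isPeriodic_recode (hc : c ∈ Y.adm) (hU : IsPeriodic U c) (T : ℕ) :
    IsPeriodic U (Y.recode T c) := fun u hu => by
  rw [recode, ← Y.encode_smul, ← Y.endo.iterate_smul, ← Y.decode_shift c hc, hU u hu]

section Compact

variable [CompactSpace X]

lemma exists_finite_dist_smul_iterate_lt (Y : SymbolicModel G α Δ f) (n : ℕ) :
    ∃ F : Set G, F.Finite ∧ ∀ c ∈ Y.adm, ∀ c' ∈ Y.adm, ∀ g,
      (∀ k ∈ F, c (k * g) = c' (k * g)) →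
        dist (g • f^[n] (Y.decode c)) (g • f^[n] (Y.decode c')) < Δ / 2 := by
  have huc : UniformContinuous f^[n] :=
    CompactSpace.uniformContinuous_of_continuous (Y.endo.continuous.iterate n)
  obtain ⟨η, hη, hfη⟩ := Metric.uniformContinuous_iff.1 huc _ (half_pos Y.endo.pos)
  obtain ⟨F, hF, hdist⟩ := Y.exists_finite_dist_decode_lt η hη
  refine ⟨F, hF, fun c hc c' hc' g heq => ?_⟩
  rw [← Y.endo.iterate_smul, ← Y.endo.iterate_smul, ← Y.decode_shift c hc,
    ← Y.decode_shift c' hc']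
  exact hfη (hdist _ (Y.shift_mem g c hc) _ (Y.shift_mem g c' hc') heq)

lemma exists_finite_act_subset_mul_ne (Y : SymbolicModel G α Δ f) (n : ℕ) :
    ∃ F : Set G, F.Finite ∧ ∀ c ∈ Y.adm, ∀ c' ∈ Y.adm, Y.act n c = ∅ →
      Y.act n c' ⊆ F * {g | c g ≠ c' g} := by
  obtain ⟨F, hF, hdist⟩ := Y.exists_finite_dist_smul_iterate_lt n
  refine ⟨F⁻¹, hF.inv, fun c hc c' hc' hempty g hg => ?_⟩
  obtain ⟨k, hk, hne⟩ : ∃ k ∈ F, c (k * g) ≠ c' (k * g) := by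
    by_contra! heq
    have := hdist c hc c' hc' g heq
    rw [act_eq_empty_iff.1 hempty, Y.endo.smul_zero, dist_comm] at this
    exact lt_asymm hg this
  exact ⟨k⁻¹, inv_mem_inv.2 hk, k * g, hne, inv_mul_cancel_left k g⟩

lemma exists_finite_act_subset_mul_support (Y : SymbolicModel G α Δ f) (n : ℕ) :
    ∃ F : Set G, F.Finite ∧ ∀ c ∈ Y.adm, Y.act n c ⊆ F * support c := by
  obtain ⟨F, hF, h⟩ := Y.exists_finite_act_subset_mul_ne n
  refine ⟨F, hF, fun c hc => (h 0 Y.zero_mem c hc (act_zero n)).trans ?_⟩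
  exact mul_subset_mul_left fun g (hg : (0 : α) ≠ c g) => hg.symm

/-- Every bounded window sees at most one of the two configurations. -/
lemma exists_finite_act_superpose_eq (Y : SymbolicModel G α Δ f) (t : ℕ) :
    ∃ F : Set G, F.Finite ∧ ∀ c ∈ Y.adm, ∀ c' ∈ Y.adm, superpose c c' ∈ Y.adm →
      Y.act t c = ∅ → Disjoint (F * support c) (support c') →
        ∀ n ≥ t, Y.act n (superpose c c') = Y.act n c' := by
  obtain ⟨F, hF, hdist⟩ := Y.exists_finite_dist_smul_iterate_lt t
  refine ⟨F * F⁻¹, hF.mul hF.inv, fun c hc c' hc' hsup hdead hdisj n hn => ?_⟩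
  suffices heq : f^[t] (Y.decode (superpose c c')) = f^[t] (Y.decode c') by
    rw [act, act, ← Nat.sub_add_cancel hn, iterate_add_apply, iterate_add_apply, heq]
  refine Y.endo.expansive _ _ fun g => ?_
  by_cases hg : ∃ k ∈ F, c (k * g) ≠ 0
  · obtain ⟨k, hk, hne⟩ := hg
    have hc'_zero : ∀ l ∈ F, c' (l * g) = 0 := fun l hl => by
      refine notMem_support.1 (disjoint_left.1 hdisj ?_)
      exact ⟨_, mul_mem_mul hl (inv_mem_inv.2 hk), k * g, hne, by group⟩
    have hleft := hdist _ hsup c hc g fun l hl =>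
      superpose_of_right_eq_zero c (hc'_zero l hl)
    have hright := hdist c' hc' 0 Y.zero_mem g hc'_zero
    rw [act_eq_empty_iff.1 hdead] at hleft
    rw [decode_zero, Y.endo.iterate_zero] at hright
    refine (dist_triangle_right _ _ (g • (0 : X))).trans ?_
    linarith
  · push Not at hg
    have := hdist _ hsup c' hc' g fun l hl => superpose_of_eq_zero c' (hg l hl)
    linarith [Y.endo.pos]

end Compact

variable [ContinuousConstSMul G X]

lemma nilpotent_of_act_subset_mul (hc : c ∈ Y.adm) (hU : IsPeriodic U c) {A : Set G}
    (hA : A.Finite) {T : ℕ} (h : ∀ n ≥ T, Y.act n c ⊆ A * U) : Y.Nilpotent c := by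
  obtain ⟨n, hn, hTn⟩ := (((Filter.eventually_all_finite hA).2 fun a _ =>
    Y.endo.eventually_notMem_activeSet (Y.decode c) a).and
      (Filter.eventually_ge_atTop T)).exists
  refine ⟨n, eq_empty_of_forall_notMem fun g hg => ?_⟩
  obtain ⟨a, ha, u, hu, rfl⟩ := h n hTn hg
  exact hn a ha ((mem_act_mul hc hU n hu).1 hg)

lemma exists_finite_mem_act_of_eqOn (hc : c ∈ Y.adm) {n : ℕ} {g : G} (hg : g ∈ Y.act n c) :
    ∃ F : Set G, F.Finite ∧ ∀ c' ∈ Y.adm, EqOn c' c F → g ∈ Y.act n c' := by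
  have hopen : IsOpen {x : X | g ∈ activeSet G Δ (f^[n] x)} :=
    isOpen_lt continuous_const
      (((Y.endo.continuous.iterate n).const_smul g).dist continuous_const)
  obtain ⟨r, hr, hball⟩ := Metric.isOpen_iff.1 hopen _ hg
  obtain ⟨F, hF, hdist⟩ := Y.exists_finite_dist_decode_lt r hr
  exact ⟨F, hF, fun c' hc' hcc' => hball (hdist c' hc' c hc hcc')⟩

lemma exists_eqOn_and_mem_act {𝒩 : Set (G → α)} (h𝒩 : 𝒩 ⊆ Y.adm) (hc : c ∈ Y.adm)
    (hcl : c ∈ localClosure 𝒩) {n : ℕ} {g : G} (hg : g ∈ Y.act n c) {F : Set G}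
    (hF : F.Finite) : ∃ c' ∈ 𝒩, EqOn c' c F ∧ g ∈ Y.act n c' := by
  obtain ⟨F', hF', hmem⟩ := exists_finite_mem_act_of_eqOn hc hg
  obtain ⟨c', hc', heq⟩ := hcl (F ∪ F') (hF.union hF')
  exact ⟨c', hc', heq.mono subset_union_left,
    hmem c' (h𝒩 hc') (heq.mono subset_union_right)⟩

variable [CompactSpace X]

lemma exists_finite_act_succ_subset (Y : SymbolicModel G α Δ f) :
    ∃ F : Set G, F.Finite ∧ ∀ c n, Y.act (n + 1) c ⊆ F * Y.act n c := by
  obtain ⟨F, hF, h⟩ := Y.endo.exists_finite_activeSet_map_subset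
  refine ⟨F, hF, fun c n => ?_⟩
  rw [act, iterate_succ_apply']
  exact h _

lemma exists_mem_forall_eqOn_disjoint (Y : SymbolicModel G α Δ f) {𝒩 : Set (G → α)}
    (h𝒩 : 𝒩 ⊆ Y.adm) (hne : 𝒩.Nonempty) {D : Set G} (hD : D.Finite) :
    ∃ y ∈ 𝒩, ∃ F : Set G, F.Finite ∧ ∃ k, ∀ c ∈ 𝒩, EqOn c y F →
      ∀ n ≥ k, Disjoint D (Y.act n c) := by
  obtain ⟨_, ⟨y, hy, rfl⟩, r, hr, k, hball⟩ :=
    Y.endo.exists_ball_forall_disjoint (hne.image Y.decode) hD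
  obtain ⟨F, hF, hdist⟩ := Y.exists_finite_dist_decode_lt r hr
  exact ⟨y, hy, F, hF, k, fun c hc heq =>
    hball _ (mem_image_of_mem _ hc) (hdist c (h𝒩 hc) y (h𝒩 hy) heq)⟩

end SymbolicModel

namespace SymbolicModel

section Windows

variable {G α X : Type*} [Group G] [Zero α] [MetricSpace X] [CompactSpace X] [Zero X]
  [MulAction G X] [ContinuousConstSMul G X] {Δ : ℝ} {f : X → X} (Y : SymbolicModel G α Δ f)
  {L K : Subgroup G} {B : Set G}

/-- A far away configuration can be superposed to the locally generic one provided by Baire's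
theorem without changing the latter near `D`. -/
lemma exists_finite_forall_disjoint_act {𝒩 : Set (G → α)} (h𝒩 : 𝒩 ⊆ Y.adm) (hzero : 0 ∈ 𝒩)
    (hsup : ∀ c ∈ 𝒩, ∀ c' ∈ 𝒩, Y.Apart c c' → Y.Nilpotent (superpose c c') →
      superpose c c' ∈ 𝒩)
    (hnil : ∀ c ∈ 𝒩, Y.Nilpotent c)
    (hfin : ∀ c ∈ 𝒩, ∃ A : Set G, A.Finite ∧ support c ⊆ A * L) {D : Set G} (hD : D.Finite) :
    ∃ E : Set G, E.Finite ∧ ∃ T, ∀ c ∈ 𝒩, Disjoint (support c) (E * L) →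
      ∀ n ≥ T, Disjoint D (Y.act n c) := by
  obtain ⟨y, hy, F, hF, k, hk⟩ := Y.exists_mem_forall_eqOn_disjoint h𝒩 ⟨0, hzero⟩ hD
  obtain ⟨t, ht⟩ := hnil y hy
  obtain ⟨A, hA, hyA⟩ := hfin y hy
  obtain ⟨F', hF', hact⟩ := Y.exists_finite_act_superpose_eq t
  refine ⟨F ∪ (F' ∪ Y.collar) * A,
    hF.union ((hF'.union FiniteTypeShift.finite_collar).mul hA), max k t,
    fun c hc hdisj n hn => ?_⟩
  have hfar : ∀ {P : Set G}, P ⊆ F' ∪ Y.collar → Disjoint (P * support y) (support c) :=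
    fun hP => hdisj.symm.mono_left <| (mul_subset_mul hP hyA).trans <| by
      rw [← mul_assoc]
      exact mul_subset_mul_right subset_union_right
  have hapart : Y.Apart y c := hfar subset_union_right
  have heq := hact y (h𝒩 hy) c (h𝒩 hc)
    (FiniteTypeShift.superpose_mem_adm (h𝒩 hy) (h𝒩 hc) hapart) ht (hfar subset_union_left)
  have hsup_nil : Y.Nilpotent (superpose y c) := by
    obtain ⟨m, hm⟩ := hnil c hc
    exact ⟨max m t, by rw [heq _ (le_max_right _ _), act_eq_empty_of_le (le_max_left _ _) hm]⟩
  rw [← heq n (le_trans (le_max_right _ _) hn)]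
  refine hk _ (hsup y hy c hc hapart hsup_nil) (fun g hg => ?_) n
    (le_trans (le_max_left _ _) hn)
  refine superpose_of_right_eq_zero y (notMem_support.1 (disjoint_right.1 hdisj ?_))
  exact ⟨g, Or.inl hg, 1, one_mem L, mul_one g⟩

lemma exists_finite_act_add_inter_subset (U : Subgroup G) (hB : B.Finite) :
    ∃ E : Set G, E.Finite ∧ ∃ N, ∀ x ∈ Y.adm, IsPeriodic U x → Y.Nilpotent x →
      ∀ T, (∃ A : Set G, A.Finite ∧ Y.act T x ⊆ A * U) →
        ∀ n ≥ N, Y.act (n + T) x ∩ (B * Subgroup.normalizer (U : Set G)) ⊆ E * Y.act T x := by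
  obtain ⟨E, hE, N, hN⟩ := Y.exists_finite_forall_disjoint_act (L := U)
    (𝒩 := {c ∈ Y.adm | IsPeriodic U c ∧ Y.Nilpotent c ∧
      ∃ A : Set G, A.Finite ∧ support c ⊆ A * U})
    (fun c hc => hc.1)
    ⟨Y.zero_mem, fun _ _ => rfl, ⟨0, act_zero 0⟩, ∅, finite_empty, by simp⟩
    (fun c hc c' hc' hapart hnil => ⟨FiniteTypeShift.superpose_mem_adm hc.1 hc'.1 hapart,
      hc.2.1.superpose hc'.2.1, hnil, by
        obtain ⟨A, hA, hcA⟩ := hc.2.2.2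
        obtain ⟨A', hA', hcA'⟩ := hc'.2.2.2
        exact ⟨A ∪ A', hA.union hA', by
          rw [support_superpose, union_mul]; exact union_subset_union hcA hcA'⟩⟩)
    (fun c hc => hc.2.2.1) (fun c hc => hc.2.2.2) hB
  refine ⟨B * E⁻¹ * Y.radius, (hB.mul hE.inv).mul Y.finite_radius, N, ?_⟩
  rintro x hx hxU ⟨m, hm⟩ T ⟨A, hA, hTA⟩ n hn _ ⟨hact, b, hb, k, hk, rfl⟩
  set z := Y.recode T x
  have hz : z ∈ Y.adm := recode_mem T x
  have hzU : IsPeriodic U z := isPeriodic_recode hx hxU T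
  have hb_act : b ∈ Y.act n (shift k z) := by rwa [mem_act_shift hz, act_recode]
  have hsupp : support (shift k z) ⊆ Y.radius * A * {k⁻¹} * (U : Set G) := by
    rw [support_shift, mul_assoc _ {k⁻¹},
      Subgroup.set_mul_normalizer_comm {k⁻¹} U (singleton_subset_iff.2 (inv_mem hk)), ← mul_assoc,
      mul_assoc Y.radius]
    exact mul_subset_mul_right ((support_recode_subset T x).trans (mul_subset_mul_left hTA))
  have hnil : Y.Nilpotent (shift k z) := ⟨m, eq_empty_of_forall_notMem fun g hg => by
    rw [mem_act_shift hz, act_recode, act_eq_empty_of_le (Nat.le_add_right m T) hm] at hg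
    exact hg⟩
  obtain ⟨_, hne, e, he, u, hu, rfl⟩ := not_disjoint_iff.1 fun hdisj =>
    disjoint_left.1 (hN (shift k z) ⟨Y.shift_mem k z hz, hzU.shift hk, hnil,
      _, (Y.finite_radius.mul hA).mul (finite_singleton _), hsupp⟩ hdisj n hn) hb hb_act
  rw [mem_support, (hzU.shift hk).apply_mul e hu] at hne
  obtain ⟨r, hr, h, hh, hrh⟩ := support_recode_subset T x hne
  refine ⟨b * e⁻¹ * r, mul_mem_mul (mul_mem_mul hb (inv_mem_inv.2 he)) hr, h, hh, ?_⟩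
  change b * e⁻¹ * r * h = b * k
  rw [mul_assoc, show r * h = e * k from hrh]
  group

section Confinement

variable {ι : Type*} [Nonempty ι] {V : ι → Subgroup G}

lemma exists_finite_forall_disjoint_act_of_directed (hV : Directed (· ≥ ·) V) (hVL : ∀ i, V i ≤ L)
    (hindex : ∀ i, (V i).relIndex L ≠ 0) (hBL : B * (L : Set G) ⊆ B)
    (hnil : ∀ i, ∀ c ∈ Y.periodizations (V i) B, Y.Nilpotent c) {D : Set G} (hD : D.Finite) :
    ∃ E : Set G, E.Finite ∧ ∃ N, ∀ c ∈ Y.periodizations (⨅ i, V i) B,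
      Disjoint (support c) (E * L) → ∀ n ≥ N, Disjoint D (Y.act n c) := by
  set 𝒩 : Set (G → α) := {c | ∃ i, c ∈ Y.periodizations (V i) B}
  have hsup : ∀ c ∈ 𝒩, ∀ c' ∈ 𝒩, Y.Apart c c' → superpose c c' ∈ 𝒩 := by
    rintro c ⟨i, hi⟩ c' ⟨j, hj⟩ hapart
    obtain ⟨k, hik, hjk⟩ := hV i j
    have hle : ∀ l, V k ≤ V l → Y.periodizations (V l) B ⊆ Y.periodizations (V k) B :=
      fun l hl => FiniteTypeShift.periodizations_subset_of_relIndex_ne_zero hl fun h =>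
        hindex k (Subgroup.relIndex_eq_zero_of_le_right (hVL l) h)
    exact ⟨k, FiniteTypeShift.superpose_mem_periodizations (hle i hik hi) (hle j hjk hj) hapart⟩
  have hfin : ∀ c ∈ 𝒩, ∃ A : Set G, A.Finite ∧ support c ⊆ A * L := by
    rintro c ⟨i, -, ⟨A, hA⟩, -⟩
    exact ⟨A, hA.finite, hA.support_eq.trans_subset (mul_subset_mul_left (hVL i))⟩
  obtain ⟨E, hE, N, hN⟩ := Y.exists_finite_forall_disjoint_act (L := L) (𝒩 := 𝒩)
    (fun c ⟨_, hc⟩ => hc.1) ⟨Classical.arbitrary ι, FiniteTypeShift.zero_mem_periodizations _ _⟩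
    (fun c hc c' hc' hapart _ => hsup c hc c' hc' hapart)
    (fun c ⟨i, hc⟩ => hnil i c hc) hfin hD
  refine ⟨E, hE, N, fun c hc hdisj n hn => disjoint_left.2 fun d hd hact => ?_⟩
  obtain ⟨F, hF, hFact⟩ := exists_finite_mem_act_of_eqOn hc.1 hact
  obtain ⟨i, c', ⟨hadm, hcell, hsupp⟩, heq⟩ :=
    FiniteTypeShift.exists_mem_periodizations_eqOn_of_directed hV hc hF
  have hsuppL : support c' ⊆ support c * L := hsupp.trans (mul_subset_mul_left (hVL i))
  refine disjoint_left.1 (hN c' ⟨i, hadm, hcell, ?_⟩ ?_ n hn) hd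
    (hFact c' hadm heq)
  · exact hsuppL.trans ((mul_subset_mul_right hc.2.2).trans hBL)
  · refine disjoint_left.2 fun g hg hgE => ?_
    obtain ⟨s, hs, l, hl, rfl⟩ := hsuppL hg
    obtain ⟨e, he, l', hl', hel⟩ := hgE
    refine disjoint_left.1 hdisj hs ⟨e, he, l' * l⁻¹, mul_mem hl' (inv_mem hl), ?_⟩
    change e * (l' * l⁻¹) = s
    rw [← mul_assoc, show e * l' = s * l from hel, mul_inv_cancel_right]

/-- An active position near `K` is moved into a fixed window by an element of `K`, and late activity
in that window requires a nearby coset of `L`. -/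
lemma exists_finite_act_subset_mul_of_directed (hV : Directed (· ≥ ·) V) (hVL : ∀ i, V i ≤ L)
    (hindex : ∀ i, (V i).relIndex L ≠ 0) (hLK : L ≤ K)
    (hKV : K ≤ Subgroup.normalizer ((⨅ i, V i : Subgroup G) : Set G))
    (hKL : K ≤ Subgroup.normalizer (L : Set G)) (hBK : B * (K : Set G) ⊆ B)
    (hnil : ∀ i, ∀ c ∈ Y.periodizations (V i) B, Y.Nilpotent c)
    {B' : Set G} (hB' : B'.Finite)
    (hact : ∀ c ∈ Y.periodizations (⨅ i, V i) B, ∀ n, Y.act n c ⊆ B' * K)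
    {B₁ : Set G} (hB₁ : B₁.Finite) :
    ∃ B₂ : Set G, B₂.Finite ∧ ∀ c ∈ Y.periodizations (⨅ i, V i) B, support c ⊆ B₁ * L →
      ∀ n, Y.act n c ⊆ B₂ * L := by
  obtain ⟨E, hE, N, hN⟩ := Y.exists_finite_forall_disjoint_act_of_directed hV hVL hindex
    ((mul_subset_mul_left hLK).trans hBK) hnil hB'
  choose F hF hFact using Y.exists_finite_act_subset_mul_support
  refine ⟨B' * E⁻¹ * B₁ ∪ (⋃ n ∈ Iio N, F n) * B₁, ?_, fun c hc hsupp n g hg => ?_⟩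
  · exact ((hB'.mul hE.inv).mul hB₁).union
      (((finite_Iio N).biUnion fun n _ => hF n).mul hB₁)
  rw [union_mul]
  rcases lt_or_ge n N with hn | hn
  · refine Or.inr ?_
    rw [mul_assoc]
    exact mul_subset_mul (subset_biUnion_of_mem (u := F) (mem_Iio.2 hn)) hsupp (hFact n c hc.1 hg)
  · refine Or.inl ?_
    obtain ⟨b, hb, k, hk, rfl⟩ := hact c hc n hg
    have hshift : shift k c ∈ Y.periodizations (⨅ i, V i) B := by
      obtain ⟨hadm, hcell, hB⟩ := FiniteTypeShift.shift_mem_periodizations hc (hKV hk)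
      exact ⟨hadm, hcell, hB.trans ((mul_subset_mul_left
        (singleton_subset_iff.2 (inv_mem hk))).trans hBK)⟩
    obtain ⟨_, hne, e, he, l, hl, rfl⟩ := not_disjoint_iff.1 fun hdisj =>
      disjoint_left.1 (hN _ hshift hdisj n hn) hb ((mem_act_shift hc.1 n).2 hg)
    obtain ⟨b₁, hb₁, l', hl', heq⟩ := hsupp hne
    refine ⟨b * e⁻¹ * b₁, mul_mem_mul (mul_mem_mul hb (inv_mem_inv.2 he)) hb₁,
      l' * (k⁻¹ * l⁻¹ * k), mul_mem hl' ?_, ?_⟩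
    · exact (Subgroup.mem_normalizer_iff''.1 (hKL hk) _).1 (inv_mem hl)
    · change b * e⁻¹ * b₁ * (l' * (k⁻¹ * l⁻¹ * k)) = b * k
      rw [← mul_assoc, mul_assoc _ b₁, show b₁ * l' = e * l * k from heq]
      group

end Confinement

end Windows

end SymbolicModel

lemma exists_abs_eq_and_abs_sub_mul_le {p m R j : ℤ} (hm : 0 ≤ m) (hj : p * m ≤ |j|)
    (hjR : |j| ≤ p * m + R) : ∃ i : ℤ, |i| = m ∧ |j - p * i| ≤ R := by
  rcases le_total 0 j with h | h
  · rw [abs_of_nonneg h] at hj hjR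
    exact ⟨m, abs_of_nonneg hm, abs_le.2 ⟨by omega, by omega⟩⟩
  · rw [abs_of_nonpos h] at hj hjR
    refine ⟨-m, by rw [abs_neg, abs_of_nonneg hm], ?_⟩
    rw [mul_neg, abs_le]
    omega

lemma abs_le_abs_natCast_mul {p : ℕ} (hp : 0 < p) (i : ℤ) : |i| ≤ |(p : ℤ) * i| := by
  rw [abs_mul, Nat.abs_cast]
  exact le_mul_of_one_le_left (abs_nonneg i) (by exact_mod_cast hp)

section Levels

variable {G : Type*} [Group G]

/-- The `i`-th of the slices into which the cosets of `U` divide the neighbourhood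
`B * (U ⊔ zpowers s)` of `U ⊔ zpowers s`. -/
def level (U : Subgroup G) (s : G) (B : Set G) (i : ℤ) : Set G := B * {s ^ i} * U

/-- The union of the cosets of `U` by the powers `s ^ (p * i)`, `i ∈ I`. -/
def places (U : Subgroup G) (s : G) (p : ℕ) (I : Set ℤ) : Set G :=
  ((fun i : ℤ => s ^ (p * i)) '' I) * U

variable {U : Subgroup G} {s g : G} {A B C : Set G} {i : ℤ} {p : ℕ} {I : Set ℤ}

lemma mem_level : g ∈ level U s B i ↔ ∃ b ∈ B, ∃ u ∈ U, g = b * (s ^ i * u) := by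
  simp only [level, mul_assoc, singleton_mul, mem_mul, exists_mem_image, SetLike.mem_coe,
    eq_comm (a := g)]

lemma mul_level (A B : Set G) (i : ℤ) : A * level U s B i = level U s (A * B) i := by
  simp only [level, mul_assoc]

lemma level_mono (h : B ⊆ C) (i : ℤ) : level U s B i ⊆ level U s C i :=
  mul_subset_mul_right (mul_subset_mul_right h)

lemma level_zero (B : Set G) : level U s B 0 = B * U := by
  simp [level]

lemma mem_level_of_mem (hg : g ∈ B) (i : ℤ) : g * s ^ i ∈ level U s B i :=
  mem_level.2 ⟨g, hg, 1, one_mem U, by rw [mul_one]⟩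

lemma exists_finite_level_subset (hB : B.Finite) (m : ℤ) :
    ∃ A : Set G, A.Finite ∧ ∀ i j, |i - j| ≤ m → level U s B i ⊆ level U s A j := by
  refine ⟨B * (fun i : ℤ => s ^ i) '' Icc (-m) m, hB.mul ((finite_Icc _ _).image _),
    fun i j hij => mul_subset_mul_right ?_⟩
  rw [mul_assoc]
  refine mul_subset_mul_left (singleton_subset_iff.2 ?_)
  exact ⟨_, mem_image_of_mem _ (abs_le.1 hij), s ^ j, rfl, by simp [← zpow_add]⟩

lemma mul_places : A * places U s p I = ⋃ i ∈ I, level U s A (p * i) := by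
  ext g
  simp only [places, mem_mul, mem_image, mem_iUnion, mem_level]
  constructor
  · rintro ⟨a, ha, _, ⟨_, ⟨i, hi, rfl⟩, u, hu, rfl⟩, rfl⟩
    exact ⟨i, hi, a, ha, u, hu, rfl⟩
  · rintro ⟨i, hi, a, ha, u, hu, rfl⟩
    exact ⟨a, ha, _, ⟨_, ⟨i, hi, rfl⟩, u, hu, rfl⟩, rfl⟩

lemma mem_mul_places : g ∈ A * places U s p I ↔ ∃ i ∈ I, g ∈ level U s A (p * i) := by
  simp only [mul_places, mem_iUnion, exists_prop]

lemma exists_abs_le_of_eq_zpow_mul (hfree : ∀ i : ℤ, s ^ i ∈ U → i = 0) (x : G) :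
    ∃ r : ℕ, ∀ i : ℤ, ∀ u ∈ U, x = s ^ i * u → |i| ≤ r := by
  by_cases h : ∃ j : ℤ, ∃ v ∈ U, x = s ^ j * v
  · obtain ⟨j, v, hv, rfl⟩ := h
    refine ⟨j.natAbs, fun i u hu e => ?_⟩
    have hpow : s ^ (-i + j) = u * v⁻¹ := by
      rw [zpow_add, zpow_neg, eq_mul_inv_iff_mul_eq, mul_assoc, e, inv_mul_cancel_left]
    have hij := hfree (-i + j) (hpow ▸ mul_mem hu (inv_mem hv))
    rw [neg_add_eq_zero.1 hij, Int.abs_eq_natAbs]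
  · exact ⟨0, fun i u hu e => absurd ⟨i, u, hu, e⟩ h⟩

variable (hs : s ∈ Subgroup.normalizer (U : Set G))
include hs

lemma mul_sup_zpowers (B : Set G) :
    B * ((U ⊔ Subgroup.zpowers s : Subgroup G) : Set G) = ⋃ i, level U s B i := by
  ext g
  simp only [coe_sup_zpowers hs, mem_mul, mem_iUnion, mem_level, SetLike.mem_coe,
    Subgroup.mem_zpowers_iff]
  constructor
  · rintro ⟨b, hb, _, ⟨_, ⟨i, rfl⟩, u, hu, rfl⟩, rfl⟩
    exact ⟨i, b, hb, u, hu, rfl⟩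
  · rintro ⟨i, b, hb, u, hu, rfl⟩
    exact ⟨b, hb, _, ⟨_, ⟨i, rfl⟩, u, hu, rfl⟩, rfl⟩

lemma places_univ (p : ℕ) :
    places U s p univ = (U ⊔ Subgroup.zpowers (s ^ p) : Subgroup G) := by
  rw [coe_sup_zpowers (pow_mem hs p), places]
  congr 1
  ext g
  simp [Subgroup.mem_zpowers_iff, zpow_mul]

lemma places_univ_subset (p : ℕ) :
    places U s p univ ⊆ (U ⊔ Subgroup.zpowers s : Subgroup G) := by
  rw [places_univ hs]
  exact sup_le_sup_left (Subgroup.zpowers_le.2 (pow_mem (Subgroup.mem_zpowers s) p)) U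

lemma conj_zpow_mem (i : ℤ) {u : G} (hu : u ∈ U) : s ^ i * u * (s ^ i)⁻¹ ∈ U :=
  (Subgroup.mem_normalizer_iff.1 (zpow_mem hs i) u).1 hu

lemma mul_zpow_mem_level (hg : g ∈ level U s B i) (j : ℤ) : g * s ^ j ∈ level U s B (i + j) := by
  obtain ⟨b, hb, u, hu, rfl⟩ := mem_level.1 hg
  refine mem_level.2 ⟨b, hb, _, conj_zpow_mem hs (-j) hu, ?_⟩
  rw [zpow_add]
  group

lemma exists_abs_sub_le_of_mem_level (hfree : ∀ i : ℤ, s ^ i ∈ U → i = 0) (hB : B.Finite)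
    (hC : C.Finite) :
    ∃ r : ℕ, ∀ g i j, g ∈ level U s B i → g ∈ level U s C j → |i - j| ≤ r := by
  choose r hr using exists_abs_le_of_eq_zpow_mul hfree
  obtain ⟨R, hR⟩ := ((hB.inv.mul hC).image r).bddAbove
  refine ⟨R, fun g i j hi hj => ?_⟩
  obtain ⟨b, hb, u, hu, rfl⟩ := mem_level.1 hi
  obtain ⟨c, hc, v, hv, e⟩ := mem_level.1 hj
  refine (hr (b⁻¹ * c) (i - j) _ (conj_zpow_mem hs j (mul_mem hu (inv_mem hv))) ?_).trans ?_
  · have : c = b * (s ^ i * u) * (s ^ j * v)⁻¹ := by rw [e]; group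
    rw [this, zpow_sub]
    group
  · exact_mod_cast hR (mem_image_of_mem r (mul_mem_mul (inv_mem_inv.2 hb) hc))

lemma exists_pos_eq_of_mem_level_mul (hfree : ∀ i : ℤ, s ^ i ∈ U → i = 0) (hB : B.Finite)
    (hC : C.Finite) : ∃ p : ℕ, 0 < p ∧ ∀ g (i j : ℤ), g ∈ level U s B (p * i) →
      g ∈ level U s C (p * j) → i = j := by
  obtain ⟨r, hr⟩ := exists_abs_sub_le_of_mem_level hs hfree hB hC
  refine ⟨r + 1, r.succ_pos, fun g i j hi hj => ?_⟩
  have hle := hr g _ _ hi hj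
  rw [← mul_sub, abs_mul, Nat.abs_cast] at hle
  by_contra hne
  have := Int.one_le_abs (sub_ne_zero.2 hne)
  push_cast at hle
  nlinarith

end Levels

namespace FiniteTypeShift

section Walls

variable {G α : Type*} [Group G] [Zero α] {Y : FiniteTypeShift G α} {U : Subgroup G} {s : G}
  {w : G → α} {A F : Set G} {p : ℕ}

lemma IsCell.separated_places (h : Y.IsCell w U A) (hs : s ∈ Subgroup.normalizer (U : Set G))
    (hp : ∀ g (i j : ℤ), g ∈ level U s (Y.collar * A) (p * i) → g ∈ level U s A (p * j) → i = j)
    (I : Set ℤ) : Separated Y.collar A (places U s p I) := by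
  rintro k hk a ha a' ha' _ ⟨_, ⟨i, -, rfl⟩, u, hu, rfl⟩ _ ⟨_, ⟨j, -, rfl⟩, v, hv, rfl⟩ e
  dsimp only at e ⊢
  obtain rfl := hp _ i j (mem_level.2 ⟨k * a, mul_mem_mul hk ha, u, hu, rfl⟩)
    (mem_level.2 ⟨a', ha', v, hv, e⟩)
  have hone := h.eq_one_of_mul_eq hk ha ha'
    (conj_zpow_mem hs (p * i) (mul_mem hv (inv_mem hu))) (by
      rw [← mul_inv_eq_iff_eq_mul.2 e.symm]; group)
  rw [mul_inv_eq_one, mul_eq_left, mul_inv_eq_one] at hone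
  rw [hone]

lemma IsCell.eqOn_shift_copies_places (h : Y.IsCell w U A)
    (hs : s ∈ Subgroup.normalizer (U : Set G)) {I : Set ℤ}
    (hsep : Separated Y.collar A (places U s p I))
    (hp : ∀ g (i j : ℤ), g ∈ level U s F (p * i) → g ∈ level U s A (p * j) → i = j)
    {i : ℤ} (hi : i ∈ I) : EqOn (shift (s ^ (p * i)) (copies w A (places U s p I))) w F := by
  intro g hg
  have hmem {j : ℤ} (hj : g * s ^ (p * i) ∈ level U s A (p * j)) : i = j :=
    hp _ i j (mem_level_of_mem hg _) hj
  by_cases hg' : g * s ^ (p * i) ∈ A * places U s p I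
  · obtain ⟨j, -, hj⟩ := mem_mul_places.1 hg'
    obtain rfl := hmem hj
    obtain ⟨a, ha, u, hu, e⟩ := mem_level.1 hj
    have hplace : s ^ (p * i) * u ∈ places U s p I :=
      mul_mem_mul (mem_image_of_mem (fun i : ℤ => s ^ (p * i)) hi) hu
    rw [shift, e, copies_apply hsep one_mem_collar w ha hplace,
      eq_mul_inv_of_mul_eq e, ← h.periodic.apply_mul a (conj_zpow_mem hs (p * i) hu)]
    congr 1
    group
  · rw [shift, copies_of_notMem w hg']
    by_contra hne
    have hsupp : g ∈ level U s A 0 := by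
      rw [level_zero, ← h.support_eq]
      exact Ne.symm hne
    exact hg' (mem_mul_places.2 ⟨i, hi, by simpa using mul_zpow_mem_level hs hsupp (p * i)⟩)

lemma copies_places_congr {I J : Set ℤ} {g : G}
    (h : ∀ i, g ∈ level U s A (p * i) → (i ∈ I ↔ i ∈ J)) :
    copies w A (places U s p I) g = copies w A (places U s p J) g := by
  refine copies_congr w fun v hv => ?_
  have hmem {i : ℤ} {u : G} (hu : u ∈ U) (e : s ^ (p * i) * u = v) : g ∈ level U s A (p * i) :=
    mem_level.2 ⟨_, hv, u, hu, by rw [e, inv_mul_cancel_right]⟩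
  constructor
  · rintro ⟨_, ⟨i, hi, rfl⟩, u, hu, e⟩
    exact ⟨_, ⟨i, (h i (hmem hu e)).1 hi, rfl⟩, u, hu, e⟩
  · rintro ⟨_, ⟨i, hi, rfl⟩, u, hu, e⟩
    exact ⟨_, ⟨i, (h i (hmem hu e)).2 hi, rfl⟩, u, hu, e⟩

lemma IsCell.copies_places_mem_periodizations (h : Y.IsCell w U A) (hw : w ∈ Y.adm) {I : Set ℤ}
    (hI : I.Finite) (hsep : Separated Y.collar A (places U s p I)) :
    copies w A (places U s p I) ∈ Y.periodizations U (A * places U s p I) :=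
  ⟨h.copies_mem_adm hw hsep, h.exists_isCell_copies (hI.image _) hsep,
    (support_copies hsep one_mem_collar h.subset_support).subset⟩

lemma IsCell.copies_places_univ_mem_periodizations (h : Y.IsCell w U A) (hw : w ∈ Y.adm)
    (hs : s ∈ Subgroup.normalizer (U : Set G)) (hsep : Separated Y.collar A (places U s p univ)) :
    copies w A (places U s p univ) ∈
      Y.periodizations (U ⊔ Subgroup.zpowers (s ^ p)) (A * places U s p univ) := by
  refine ⟨h.copies_mem_adm hw hsep, ?_,
    (support_copies hsep one_mem_collar h.subset_support).subset⟩
  rw [places_univ hs] at hsep ⊢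
  have := h.exists_isCell_copies (M := U ⊔ Subgroup.zpowers (s ^ p)) (finite_singleton 1)
  rw [singleton_mul, image_congr fun a _ => one_mul a, image_id'] at this
  exact this hsep

/-- The configuration `c` protected by copies of the pattern of `w` on `A` around the remote cosets
`s ^ (p * i) * U`, `k < |i|`. -/
noncomputable def walled (U : Subgroup G) (s : G) (p : ℕ) (w : G → α) (A : Set G) (c : G → α)
    (k : ℕ) : G → α :=
  superpose c (copies w A (places U s p {i | (k : ℤ) < |i|}))

variable {c : G → α} {k : ℕ} {B : Set G}

lemma exists_mem_level_of_walled_ne {g : G} (h : walled U s p w A c k g ≠ c g) :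
    ∃ i : ℤ, k < |i| ∧ g ∈ level U s A (p * i) := by
  by_contra hg
  exact h (superpose_of_right_eq_zero c (copies_of_notMem w (mt mem_mul_places.1 hg)))

lemma mem_support_or_exists_mem_level_of_ne_walled {g : G}
    (h : copies w A (places U s p univ) g ≠ walled U s p w A c k g) :
    g ∈ support c ∨ ∃ i : ℤ, |i| ≤ k ∧ g ∈ level U s A (p * i) := by
  by_contra! hg
  rw [walled, superpose_of_eq_zero _ (notMem_support.1 hg.1)] at h
  exact h (copies_places_congr fun i hi =>
    ⟨fun _ => not_le.1 fun hle => hg.2 i hle hi, fun _ => mem_univ i⟩)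

section Protected

variable (hs : s ∈ Subgroup.normalizer (U : Set G)) (hfree : ∀ i : ℤ, s ^ i ∈ U → i = 0)
  (hp : 0 < p)
include hs hfree hp

lemma exists_forall_notMem_level_mul {C : Set G} (hC : C.Finite) (hF : F.Finite) :
    ∃ k : ℕ, ∀ i : ℤ, k < |i| → ∀ g ∈ level U s F 0, g ∉ level U s C (p * i) := by
  obtain ⟨k, hk⟩ := exists_abs_sub_le_of_mem_level hs hfree hF hC
  refine ⟨k, fun i hi g hF hC => ?_⟩
  have := hk g 0 _ hF hC
  rw [zero_sub, abs_neg] at this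
  exact (hi.trans_le ((abs_le_abs_natCast_mul hp i).trans this)).false

lemma exists_walled_mem_localClosure (hc : c ∈ Y.periodizations U B)
    (hA : Y.IsCell w U A) (hw : w ∈ Y.adm)
    (hsep : Separated Y.collar A (places U s p univ)) (hB : A * places U s p univ ⊆ B) :
    ∃ k₀ : ℕ, ∀ k ≥ k₀, walled U s p w A c k ∈ localClosure (Y.periodizations U B) := by
  obtain ⟨-, ⟨C, hC⟩, -⟩ := id hc
  obtain ⟨k₀, hk₀⟩ := exists_forall_notMem_level_mul hs hfree hp hA.finite
    (finite_collar (Y := Y) |>.mul hC.finite)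
  refine ⟨k₀, fun k hk F hF => ?_⟩
  obtain ⟨m, hm⟩ := exists_forall_notMem_level_mul hs hfree hp hA.finite hF
  set I : Set ℤ := {i | k < |i| ∧ |i| ≤ m}
  have hI : I.Finite := (finite_Icc (-(m : ℤ)) m).subset fun i hi => abs_le.1 hi.2
  have hplaces : places U s p I ⊆ places U s p univ :=
    mul_subset_mul_right (image_mono (subset_univ I))
  have hcopies := hA.copies_places_mem_periodizations hw hI (hsep.mono hplaces)
  have hapart : Y.Apart c (copies w A (places U s p I)) := by
    rw [Apart, hC.support_eq, ← mul_assoc, ← level_zero (s := s),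
      support_copies (hsep.mono hplaces) one_mem_collar hA.subset_support]
    refine disjoint_left.2 fun g hg hgA => ?_
    obtain ⟨i, hi, hgi⟩ := mem_mul_places.1 hgA
    exact hk₀ i (lt_of_le_of_lt (by exact_mod_cast hk) hi.1) g hg hgi
  refine ⟨_, superpose_mem_periodizations hc ⟨hcopies.1, hcopies.2.1,
    hcopies.2.2.trans ((mul_subset_mul_left hplaces).trans hB)⟩ hapart, fun g hg => ?_⟩
  have hcongr : copies w A (places U s p I) g =
      copies w A (places U s p {i | (k : ℤ) < |i|}) g :=
    copies_places_congr fun i hi => ⟨fun h => h.1, fun h => ⟨h, not_lt.1 fun hlt =>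
      hm i hlt g (level_zero (s := s) F ▸ ⟨g, hg, 1, one_mem U, mul_one g⟩) hi⟩⟩
  simp only [walled, superpose, hcongr]

lemma exists_eqOn_shift_walled (hc : ∃ C, Y.IsCell c U C) (hA : Y.IsCell w U A)
    (hsep : Separated Y.collar A (places U s p univ)) (hF : F.Finite)
    (hspace : ∀ g (i j : ℤ), g ∈ level U s F (p * i) → g ∈ level U s A (p * j) → i = j) :
    ∃ k₀ : ℕ, ∀ k ≥ k₀, ∀ i : ℤ, k < |i| →
      EqOn (shift (s ^ (p * i)) (walled U s p w A c k)) w F := by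
  obtain ⟨C, hC⟩ := hc
  obtain ⟨k₀, hk₀⟩ := exists_abs_sub_le_of_mem_level hs hfree hF hC.finite
  refine ⟨k₀, fun k hk i hi g hg => ?_⟩
  have hplaces : places U s p {i | (k : ℤ) < |i|} ⊆ places U s p univ :=
    mul_subset_mul_right (image_mono (subset_univ _))
  rw [← hA.eqOn_shift_copies_places hs (hsep.mono hplaces) hspace hi hg]
  refine superpose_of_eq_zero _ (by_contra fun hne => ?_)
  have hmem : g * s ^ (p * i) ∈ level U s C 0 := by
    rw [level_zero, ← hC.support_eq]
    exact hne
  have := hk₀ _ _ _ (mem_level_of_mem hg _) hmem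
  rw [sub_zero] at this
  have := (abs_le_abs_natCast_mul hp i).trans this
  omega

end Protected

end Walls

end FiniteTypeShift

lemma localClosure_mono {G α : Type*} {𝒩 𝒩' : Set (G → α)} (h : 𝒩 ⊆ 𝒩') :
    localClosure 𝒩 ⊆ localClosure 𝒩' := fun _ hc F hF =>
  let ⟨c', hc', heq⟩ := hc F hF
  ⟨c', h hc', heq⟩

namespace FiniteTypeShift

variable {G α : Type*} [Group G] [Zero α] {Y : FiniteTypeShift G α} {c : G → α} {U : Subgroup G}
  {B : Set G}

lemma localClosure_adm_subset : localClosure Y.adm ⊆ Y.adm := fun c hc => Y.glue c fun g =>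
  let ⟨c', hc', heq⟩ := hc (Y.window * {g}) (Y.finite_window.mul (finite_singleton g))
  ⟨c', hc', fun _ hw => (heq (mul_mem_mul hw rfl)).symm⟩

lemma mem_adm_of_mem_localClosure (hc : c ∈ localClosure (Y.periodizations U B)) : c ∈ Y.adm :=
  localClosure_adm_subset (localClosure_mono (fun _ h => h.1) hc)

lemma isPeriodic_of_mem_localClosure (hc : c ∈ localClosure (Y.periodizations U B)) :
    IsPeriodic U c := fun u hu => funext fun g => by
  obtain ⟨c', ⟨-, ⟨A, hA⟩, -⟩, heq⟩ := hc {g, g * u} (toFinite _)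
  rw [shift, ← heq (mem_insert_of_mem _ rfl), hA.periodic.apply_mul g hu,
    heq (mem_insert _ _)]

end FiniteTypeShift

namespace SymbolicModel

section Walls

variable {G α X : Type*} [Group G] [Zero α] [MetricSpace X] [Zero X] [MulAction G X] {Δ : ℝ}
  {f : X → X} (Y : SymbolicModel G α Δ f) {U : Subgroup G} {s : G} {B B' : Set G}

/-- Far beyond the protecting copies, `walled` looks like the configuration which has copies
everywhere. -/
lemma exists_abs_le_of_mem_act_walled [CompactSpace X] (hs : s ∈ Subgroup.normalizer (U : Set G))
    (hfree : ∀ i : ℤ, s ^ i ∈ U → i = 0) (hB' : B'.Finite) {c w : G → α}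
    (hc : ∃ C, Y.IsCell c U C) {A : Set G} (hA : A.Finite) {p : ℕ}
    (hadm : copies w A (places U s p univ) ∈ Y.adm) {T : ℕ}
    (hT : Y.act T (copies w A (places U s p univ)) = ∅) :
    ∃ r : ℕ, ∀ k : ℕ, FiniteTypeShift.walled U s p w A c k ∈ Y.adm → ∀ j g, g ∈ level U s B' j →
      g ∈ Y.act T (FiniteTypeShift.walled U s p w A c k) → |j| ≤ p * k + r := by
  obtain ⟨C, hC⟩ := hc
  obtain ⟨F, hF, hact⟩ := Y.exists_finite_act_subset_mul_ne T
  obtain ⟨r, hr⟩ := exists_abs_sub_le_of_mem_level hs hfree hB' (hF.mul (hC.finite.union hA))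
  refine ⟨r, fun k hk j g hgj hg => ?_⟩
  obtain ⟨h, hh, g', hne, rfl⟩ := hact _ hadm _ hk hT hg
  obtain ⟨i, hi, hgi⟩ : ∃ i : ℤ, |i| ≤ p * k ∧ g' ∈ level U s (C ∪ A) i := by
    rcases FiniteTypeShift.mem_support_or_exists_mem_level_of_ne_walled hne with hg' | ⟨i, hi, hg'⟩
    · rw [hC.support_eq, ← level_zero (s := s)] at hg'
      exact ⟨0, by positivity, level_mono subset_union_left 0 hg'⟩
    · refine ⟨p * i, ?_, level_mono subset_union_right _ hg'⟩
      rw [abs_mul, Nat.abs_cast]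
      exact mul_le_mul_of_nonneg_left hi (Int.natCast_nonneg p)
  have hji := hr _ j i hgj (mul_level F (C ∪ A) i ▸ mul_mem_mul hh hgi)
  have := abs_sub_abs_le_abs_sub j i
  omega

variable [ContinuousConstSMul G X]

variable {Y} in
lemma act_subset_of_mem_localClosure {D : Set G} {n : ℕ}
    (h : ∀ c ∈ Y.periodizations U B, Y.act n c ⊆ D) {x : G → α}
    (hx : x ∈ localClosure (Y.periodizations U B)) : Y.act n x ⊆ D := fun _ hg =>
  let ⟨c, hc, _, hgc⟩ := exists_eqOn_and_mem_act (fun _ h => h.1)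
    (FiniteTypeShift.mem_adm_of_mem_localClosure hx) hx hg finite_empty
  h c hc hgc

variable [CompactSpace X]

/-- Baire's theorem provides a pattern `w` which eventually silences the translate of `D` around
each of its occurrences. -/
lemma exists_blocking_pattern (U : Subgroup G) (B : Set G) {D : Set G} (hD : D.Finite) :
    ∃ w ∈ Y.periodizations U B, ∃ F : Set G, F.Finite ∧ ∃ N,
      ∀ x ∈ localClosure (Y.periodizations U B), ∀ k ∈ Subgroup.normalizer (U : Set G),
        B * {k⁻¹} ⊆ B → EqOn (shift k x) w F →
          ∀ n ≥ N, Disjoint (D * {k} * (U : Set G)) (Y.act n x) := by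
  obtain ⟨w, hw, F, hF, N, hN⟩ := Y.exists_mem_forall_eqOn_disjoint
    (𝒩 := Y.periodizations U B) (fun c hc => hc.1)
    ⟨0, FiniteTypeShift.zero_mem_periodizations U B⟩ hD
  refine ⟨w, hw, F, hF, N, fun x hx k hk hBk heq n hn => disjoint_left.2 ?_⟩
  rintro _ ⟨_, ⟨d, hd, k', hk', rfl⟩, u, hu, rfl⟩ hact
  rw [mem_singleton_iff] at hk'
  subst k'
  have hadm := FiniteTypeShift.mem_adm_of_mem_localClosure hx
  replace hact : d * k ∈ Y.act n x :=
    (mem_act_mul hadm (FiniteTypeShift.isPeriodic_of_mem_localClosure hx) n hu).1 hact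
  obtain ⟨c, hc, hcx, hact⟩ := exists_eqOn_and_mem_act (fun _ h => h.1) hadm hx hact
    (hF.mul (finite_singleton k))
  have hshift : shift k c ∈ Y.periodizations U B := by
    obtain ⟨hadm, hcell, hB⟩ := FiniteTypeShift.shift_mem_periodizations hc hk
    exact ⟨hadm, hcell, hB.trans hBk⟩
  refine disjoint_left.1 (hN _ hshift (fun g hg => ?_) n hn) hd ((mem_act_shift hc.1 n).2 hact)
  rw [← heq hg]
  exact hcx (mul_mem_mul hg rfl)

/-- Activity spreads at bounded speed, so it cannot jump over a wide band. -/
lemma exists_forall_disjoint_act_of_band (hs : s ∈ Subgroup.normalizer (U : Set G))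
    (hfree : ∀ i : ℤ, s ^ i ∈ U → i = 0) (hB' : B'.Finite) :
    ∃ R : ℕ, ∀ x, (∀ n, Y.act n x ⊆ ⋃ i, level U s B' i) → ∀ (J : ℤ) (T : ℕ),
      (∀ j, J ≤ |j| → Disjoint (level U s B' j) (Y.act T x)) →
      (∀ n ≥ T, ∀ j, J ≤ |j| → |j| ≤ J + R → Disjoint (level U s B' j) (Y.act n x)) →
        ∀ n ≥ T, ∀ j, J ≤ |j| → Disjoint (level U s B' j) (Y.act n x) := by
  obtain ⟨F, hF, hstep⟩ := Y.exists_finite_act_succ_subset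
  obtain ⟨R, hR⟩ := exists_abs_sub_le_of_mem_level hs hfree hB' (hF.mul hB')
  refine ⟨R, fun x hx J T hT hband n hn => ?_⟩
  induction n, hn using Nat.le_induction with
  | base => exact hT
  | succ n hn ih =>
    intro j hj
    by_cases hjR : |j| ≤ J + R
    · exact hband (n + 1) (by omega) j hj hjR
    · refine disjoint_left.2 fun g hg hact => ?_
      obtain ⟨h, hh, g', hg', rfl⟩ := hstep x n hact
      obtain ⟨i, hi⟩ := mem_iUnion.1 (hx n hg')
      have hji := hR _ j i hg (mul_level F B' i ▸ mul_mem_mul hh hi)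
      have := abs_sub_abs_le_abs_sub j i
      exact disjoint_left.1 (ih i (by omega)) hi hg'

lemma exists_finite_act_add_subset_of_quiet (hs : s ∈ Subgroup.normalizer (U : Set G))
    (hB' : B'.Finite) :
    ∃ E : Set G, E.Finite ∧ ∃ N, ∀ x ∈ Y.adm, IsPeriodic U x →
      (∀ n, Y.act n x ⊆ ⋃ i, level U s B' i) → ∀ T,
        (∃ J : ℤ, ∀ n ≥ T, ∀ j, J ≤ |j| → Disjoint (level U s B' j) (Y.act n x)) →
          ∀ n ≥ N, Y.act (n + T) x ⊆ E * Y.act T x := by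
  obtain ⟨E, hE, N, hE_act⟩ := Y.exists_finite_act_add_inter_subset U hB'
  refine ⟨E, hE, N, fun x hx hU hact T ⟨J, hJ⟩ n hn g hg => ?_⟩
  obtain ⟨A, hA, hlevel⟩ := exists_finite_level_subset (U := U) (s := s) hB' J
  have hbounded : ∀ n ≥ T, Y.act n x ⊆ A * U := fun n hn g hg => by
    obtain ⟨j, hj⟩ := mem_iUnion.1 (hact n hg)
    rw [← level_zero (s := s)]
    refine hlevel j 0 ?_ hj
    rw [sub_zero]
    exact (not_le.1 fun h => disjoint_left.1 (hJ n hn j h) hj hg).le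
  refine hE_act x hx hU (nilpotent_of_act_subset_mul hx hU hA hbounded) T
    ⟨A, hA, hbounded T le_rfl⟩ n hn ⟨hg, ?_⟩
  obtain ⟨i, hi⟩ := mem_iUnion.1 (hact _ hg)
  obtain ⟨b, hb, u, hu, rfl⟩ := mem_level.1 hi
  exact mul_mem_mul hb (mul_mem (zpow_mem hs i) (Subgroup.le_normalizer hu))

lemma exists_abs_le_or_lt_of_mem_act_of_quiet (hs : s ∈ Subgroup.normalizer (U : Set G))
    (hfree : ∀ i : ℤ, s ^ i ∈ U → i = 0) (hB' : B'.Finite) {A : Set G} (hA : A.Finite) (T : ℕ) :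
    ∃ r N : ℕ, ∀ x ∈ Y.adm, IsPeriodic U x → (∀ n, Y.act n x ⊆ ⋃ i, level U s B' i) →
      (∃ J : ℤ, ∀ n ≥ T, ∀ j, J ≤ |j| → Disjoint (level U s B' j) (Y.act n x)) →
        ∀ k : ℕ, (∀ g ∈ support x, ∃ j : ℤ, (j = 0 ∨ k < |j|) ∧ g ∈ level U s A j) →
          ∀ n ≥ N, ∀ i, ∀ g ∈ level U s B' i, g ∈ Y.act (n + T) x → |i| ≤ r ∨ k < |i| + r := by
  obtain ⟨E, hE, N, hE_act⟩ := Y.exists_finite_act_add_subset_of_quiet hs hB'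
  obtain ⟨F, hF, hF_act⟩ := Y.exists_finite_act_subset_mul_support T
  obtain ⟨r, hr⟩ := exists_abs_sub_le_of_mem_level hs hfree hB' (hE.mul (hF.mul hA))
  refine ⟨r, N, fun x hx hU hlevels hJ k hsupp n hn i g hi hg => ?_⟩
  obtain ⟨e, he, _, hT, rfl⟩ := hE_act x hx hU hlevels T hJ n hn hg
  obtain ⟨h, hh, g', hg', rfl⟩ := hF_act x hx hT
  obtain ⟨j, hj, hg'j⟩ := hsupp g' hg'
  have hij := hr _ i j hi (by
    rw [← mul_level, ← mul_level]
    exact mul_mem_mul he (mul_mem_mul hh hg'j))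
  rcases hj with rfl | hj
  · exact .inl (by rwa [sub_zero] at hij)
  · have := abs_sub_abs_le_abs_sub j i
    rw [abs_sub_comm] at this
    exact .inr (by omega)

section Confined

variable (hs : s ∈ Subgroup.normalizer (U : Set G)) (hfree : ∀ i : ℤ, s ^ i ∈ U → i = 0)
  (hB : B * ((U ⊔ Subgroup.zpowers s : Subgroup G) : Set G) ⊆ B) (hB' : B'.Finite)
  (hact : ∀ c ∈ Y.periodizations U B, ∀ n,
    Y.act n c ⊆ B' * ((U ⊔ Subgroup.zpowers s : Subgroup G) : Set G))
  (hnil : ∀ p > 0, ∀ c ∈ Y.periodizations (U ⊔ Subgroup.zpowers (s ^ p)) B, Y.Nilpotent c)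
  {c : G → α} (hc : c ∈ Y.periodizations U B)
include hs hfree hB hB' hact hnil hc

/-- The configurations `x` arise from `c` by adding remote walls made of a blocking pattern. -/
lemma exists_quiet_mem_localClosure : ∃ C : Set G, C.Finite ∧ ∃ T k₀ : ℕ, ∀ k : ℕ, k₀ ≤ k →
    ∃ x ∈ localClosure (Y.periodizations U B),
      (∀ g, x g ≠ c g → ∃ i : ℤ, k < |i| ∧ g ∈ level U s C i) ∧
      ∃ J : ℤ, ∀ n ≥ T, ∀ j, J ≤ |j| → Disjoint (level U s B' j) (Y.act n x) := by
  obtain ⟨R, hR⟩ := Y.exists_forall_disjoint_act_of_band hs hfree hB'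
  obtain ⟨D, hD, hB'D⟩ := exists_finite_level_subset (U := U) (s := s) hB' R
  obtain ⟨w, hw, F, hF, N, hblock⟩ := Y.exists_blocking_pattern U B hD
  obtain ⟨hwadm, ⟨A, hA⟩, hwB⟩ := id hw
  obtain ⟨p, hp, hspace⟩ := exists_pos_eq_of_mem_level_mul hs hfree
    (hF.union ((FiniteTypeShift.finite_collar (Y := Y.toFiniteTypeShift)).mul hA.finite)) hA.finite
  have hsep := hA.separated_places hs
    (fun g i j hi => hspace g i j (level_mono subset_union_right _ hi)) univ
  have hAB : A * places U s p univ ⊆ B :=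
    (mul_subset_mul (hA.subset_support.trans hwB) (places_univ_subset hs p)).trans hB
  have hW := hA.copies_places_univ_mem_periodizations hwadm hs hsep
  obtain ⟨t, ht⟩ := hnil p hp _ (FiniteTypeShift.periodizations_mono hAB hW)
  set T := max N t
  obtain ⟨k₁, hk₁⟩ :=
    FiniteTypeShift.exists_walled_mem_localClosure hs hfree hp hc hA hwadm hsep hAB
  obtain ⟨k₂, hk₂⟩ := FiniteTypeShift.exists_eqOn_shift_walled hs hfree hp hc.2.1 hA hsep hF
    fun g i j hi => hspace g i j (level_mono subset_union_left _ hi)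
  obtain ⟨r, hr⟩ := Y.exists_abs_le_of_mem_act_walled hs hfree hB' hc.2.1 hA.finite hW.1
    (act_eq_empty_of_le (le_max_right N t) ht)
  refine ⟨A, hA.finite, T, max k₁ k₂, fun k hk => ?_⟩
  have hx := hk₁ k ((le_max_left _ _).trans hk)
  refine ⟨_, hx, fun g hg => ?_, p * (k + r + 1), ?_⟩
  · obtain ⟨i, hi, hgi⟩ := FiniteTypeShift.exists_mem_level_of_walled_ne hg
    exact ⟨_, hi.trans_le (abs_le_abs_natCast_mul hp i), hgi⟩
  have hp' : (1 : ℤ) ≤ p := by exact_mod_cast hp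
  refine hR _ (fun n => ?_) _ T (fun j hj => disjoint_left.2 fun g hgj hg => ?_)
    fun n hn j hj hjR => ?_
  · rw [← mul_sup_zpowers hs]
    exact act_subset_of_mem_localClosure (fun c hc => hact c hc n) hx
  · have := hr k (FiniteTypeShift.mem_adm_of_mem_localClosure hx) j g hgj hg
    nlinarith [hp']
  · obtain ⟨i, hi, hji⟩ := exists_abs_eq_and_abs_sub_mul_le (by positivity) hj hjR
    refine (hblock _ hx (s ^ (p * i)) (zpow_mem hs _) ?_ ?_ n
      ((le_max_left N t).trans hn)).mono_left (hB'D j (p * i) hji)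
    · rw [← zpow_neg]
      exact (mul_subset_mul_left (singleton_subset_iff.2 (zpow_mem
        (Subgroup.mem_sup_right (Subgroup.mem_zpowers s)) _))).trans hB
    · exact hk₂ k ((le_max_right _ _).trans hk) i (by omega)

lemma nilpotent_of_forall_nilpotent_sup_zpowers : Y.Nilpotent c := by
  obtain ⟨C, hC, T, k₀, hquiet⟩ :=
    Y.exists_quiet_mem_localClosure hs hfree hB hB' hact hnil hc
  obtain ⟨hadm, ⟨A, hA⟩, -⟩ := id hc
  obtain ⟨r, N, hr⟩ :=
    Y.exists_abs_le_or_lt_of_mem_act_of_quiet hs hfree hB' (hA.finite.union hC) T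
  obtain ⟨D, hD, hB'D⟩ := exists_finite_level_subset (U := U) (s := s) hB' r
  refine nilpotent_of_act_subset_mul hadm hA.periodic hD (T := N + T) fun n hn g hg => ?_
  have hgi := hact c hc n hg
  rw [mul_sup_zpowers hs, mem_iUnion] at hgi
  obtain ⟨i, hi⟩ := hgi
  suffices hir : |i| ≤ r by
    rw [← level_zero (s := s)]
    exact hB'D i 0 (by rwa [sub_zero]) hi
  obtain ⟨K, hK, hK_act⟩ := exists_finite_mem_act_of_eqOn hadm hg
  obtain ⟨m, hm⟩ := exists_abs_sub_le_of_mem_level hs hfree hK hC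
  set k := k₀ + m + r + i.natAbs
  obtain ⟨x, hx, hne, hJ⟩ := hquiet k (by omega)
  have hxadm := FiniteTypeShift.mem_adm_of_mem_localClosure hx
  have hgx : g ∈ Y.act n x := hK_act x hxadm fun h hh => by
    by_contra hxc
    obtain ⟨j, hj, hhj⟩ := hne h hxc
    have := hm h 0 j (level_zero K ▸ ⟨h, hh, 1, one_mem U, mul_one h⟩) hhj
    rw [zero_sub, abs_neg] at this
    omega
  have hlevels (n) : Y.act n x ⊆ ⋃ i, level U s B' i := by
    rw [← mul_sup_zpowers hs]
    exact act_subset_of_mem_localClosure (fun c hc => hact c hc n) hx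
  have hsupp : ∀ g ∈ support x, ∃ j : ℤ, (j = 0 ∨ k < |j|) ∧ g ∈ level U s (A ∪ C) j := by
    intro g hg
    by_cases hxc : x g = c g
    · refine ⟨0, .inl rfl, level_mono subset_union_left 0 ?_⟩
      rwa [level_zero, ← hA.support_eq, mem_support, ← hxc]
    · obtain ⟨j, hj, hgj⟩ := hne g hxc
      exact ⟨j, .inr hj, level_mono subset_union_right _ hgj⟩
  have hik := hr x hxadm (FiniteTypeShift.isPeriodic_of_mem_localClosure hx) hlevels hJ k hsupp
    (n - T) (by omega) i g hi (by rwa [Nat.sub_add_cancel (by omega)])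
  have := Int.abs_eq_natAbs i
  omega

end Confined

end Walls

end SymbolicModel

section ZPowers

variable {G : Type*} [Group G] {U : Subgroup G} {s : G}

lemma directed_sup_zpowers_pow (U : Subgroup G) (s : G) :
    Directed (· ≥ ·) fun p : ℕ+ => U ⊔ Subgroup.zpowers (s ^ (p : ℕ)) := fun p q => by
  refine ⟨p * q, sup_le_sup_left ?_ U, sup_le_sup_left ?_ U⟩ <;>
    rw [Subgroup.zpowers_le, PNat.mul_coe]
  · rw [pow_mul]
    exact pow_mem (Subgroup.mem_zpowers _) _
  · rw [pow_mul']
    exact pow_mem (Subgroup.mem_zpowers _) _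

lemma iInf_sup_zpowers_pow (hs : s ∈ Subgroup.normalizer (U : Set G))
    (hfree : ∀ i : ℤ, s ^ i ∈ U → i = 0) :
    ⨅ p : ℕ+, U ⊔ Subgroup.zpowers (s ^ (p : ℕ)) = U := by
  refine le_antisymm (fun g hg => ?_) (le_iInf fun _ => le_sup_left)
  obtain ⟨r, hr⟩ := exists_abs_le_of_eq_zpow_mul hfree g
  have hmem := Subgroup.mem_iInf.1 hg r.succPNat
  rw [← SetLike.mem_coe, coe_sup_zpowers (pow_mem hs _)] at hmem
  obtain ⟨_, ⟨i, rfl⟩, u, hu, rfl⟩ := hmem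
  have hpow : (s ^ ((r.succPNat : ℕ+) : ℕ)) ^ i = s ^ (((r + 1 : ℕ) : ℤ) * i) := by
    rw [zpow_mul, zpow_natCast, Nat.succPNat_coe]
  have hle := hr _ u hu (congrArg (· * u) hpow)
  obtain rfl : i = 0 := by
    by_contra hi
    rw [abs_mul, Nat.abs_cast] at hle
    have := Int.one_le_abs hi
    push_cast at hle
    nlinarith
  simpa using hu

lemma eq_zero_of_zpow_mem (h : ∀ p > 0, s ^ p ∉ U) (i : ℤ) (hi : s ^ i ∈ U) : i = 0 := by
  by_contra hne
  refine h i.natAbs (Int.natAbs_pos.2 hne) ?_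
  rcases Int.natAbs_eq i with h | h <;> rw [h] at hi
  · exact_mod_cast hi
  · rw [zpow_neg, zpow_natCast] at hi
    exact inv_mem_iff.1 hi

end ZPowers

namespace SymbolicModel

section GroupInduction

variable {G α X : Type*} [Group G] [Zero α] [MetricSpace X] [Zero X]
  [MulAction G X] [ContinuousConstSMul G X] {Δ : ℝ} {f : X → X} (Y : SymbolicModel G α Δ f)
  {M L Q U : Subgroup G} {S B B' : Set G} {c : G → α}

lemma act_subset_of_le {D : Set G} {n : ℕ} (h : ∀ c ∈ Y.periodizations M B, Y.act n c ⊆ D)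
    (hMU : M ≤ U) (hc : c ∈ Y.periodizations U B) : Y.act n c ⊆ D :=
  act_subset_of_mem_localClosure h (FiniteTypeShift.periodizations_subset_localClosure hMU hc)

variable [CompactSpace X]

lemma nilpotent_of_forall_nilpotent_sup_zpowers_pow (hUQ : U ≤ Q) (hQ : ⁅Q, Q⁆ ≤ U) {s : G}
    (hsQ : s ∈ Q) (hB : B * (Q : Set G) ⊆ B) (hB' : B'.Finite)
    (hact : ∀ c ∈ Y.periodizations U B, ∀ n, Y.act n c ⊆ B' * Q)
    (hnil : ∀ p > 0, ∀ c ∈ Y.periodizations (U ⊔ Subgroup.zpowers (s ^ p)) B, Y.Nilpotent c)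
    (hc : c ∈ Y.periodizations U B) : Y.Nilpotent c := by
  by_cases htorsion : ∃ p > 0, s ^ p ∈ U
  · obtain ⟨p, hp, hpU⟩ := htorsion
    refine hnil p hp c ?_
    rwa [sup_eq_left.2 (Subgroup.zpowers_le.2 hpU)]
  have hfree : ∀ i : ℤ, s ^ i ∈ U → i = 0 := eq_zero_of_zpow_mem fun p hp hpU =>
    htorsion ⟨p, hp, hpU⟩
  have hQU := le_normalizer_of_commutator_le hQ le_rfl hUQ
  have hs := hQU hsQ
  set K := U ⊔ Subgroup.zpowers s
  have hKQ : K ≤ Q := sup_le hUQ (Subgroup.zpowers_le.2 hsQ)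
  obtain ⟨A, hA⟩ := hc.2.1
  have hiInf := iInf_sup_zpowers_pow hs hfree
  obtain ⟨B₂, hB₂, hB₂_act⟩ := Y.exists_finite_act_subset_mul_of_directed (L := K) (K := Q)
    (directed_sup_zpowers_pow U s)
    (fun p => sup_le_sup_left (Subgroup.zpowers_le.2 (pow_mem (Subgroup.mem_zpowers s) _)) U)
    (fun p => relIndex_sup_zpowers_ne_zero hs le_sup_left p.pos
      (Subgroup.mem_sup_right (Subgroup.mem_zpowers _))) hKQ (by rwa [hiInf])
    (le_normalizer_of_commutator_le hQ le_sup_left hKQ) hB (fun p => hnil p p.pos) hB'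
    (by rwa [hiInf]) hA.finite
  rw [hiInf] at hB₂_act
  refine Y.nilpotent_of_forall_nilpotent_sup_zpowers hs hfree (B := B ∩ (A * K)) ?_ hB₂
    (fun c hc => hB₂_act c ⟨hc.1, hc.2.1, hc.2.2.trans inter_subset_left⟩
      (hc.2.2.trans inter_subset_right))
    (fun p hp c hc => hnil p hp c (FiniteTypeShift.periodizations_mono inter_subset_left hc))
    ⟨hc.1, hc.2.1, subset_inter hc.2.2 ?_⟩
  · refine inter_mul_subset.trans (inter_subset_inter ?_ ?_)
    · exact (mul_subset_mul_left hKQ).trans hB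
    · rw [mul_assoc, coe_mul_coe]
  · exact hA.support_eq.trans_subset (mul_subset_mul_left (SetLike.coe_subset_coe.2 le_sup_left))

lemma nilpotent_of_forall_exists_pow_mem (hQ : ⁅Q, Q⁆ ≤ M) (hB : B * (Q : Set G) ⊆ B)
    (hB' : B'.Finite) (hact : ∀ c ∈ Y.periodizations M B, ∀ n, Y.act n c ⊆ B' * Q)
    (hS : S.Finite) (hSQ : S ⊆ Q) (hMU : M ≤ U) (hUQ : U ≤ Q)
    (hnil : ∀ V, U ≤ V → V ≤ Q → (∀ t ∈ S, ∃ p > 0, t ^ p ∈ V) →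
      ∀ c ∈ Y.periodizations V B, Y.Nilpotent c) :
    ∀ c ∈ Y.periodizations U B, Y.Nilpotent c := by
  induction S, hS using Set.Finite.induction_on generalizing U with
  | empty => exact hnil U le_rfl hUQ fun t ht => ht.elim
  | @insert t S _ _ ih =>
    obtain ⟨htQ, hSQ⟩ := insert_subset_iff.1 hSQ
    refine fun c => Y.nilpotent_of_forall_nilpotent_sup_zpowers_pow hUQ (hQ.trans hMU) htQ hB hB'
      (fun c hc n => Y.act_subset_of_le (hact · · n) hMU hc) fun p hp => ?_
    refine ih hSQ (hMU.trans le_sup_left)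
      (sup_le hUQ (Subgroup.zpowers_le.2 (pow_mem htQ p))) fun V hV hVQ hVS => ?_
    refine hnil V (le_sup_left.trans hV) hVQ (forall_mem_insert.2 ⟨⟨p, hp, ?_⟩, hVS⟩)
    exact hV (Subgroup.mem_sup_right (Subgroup.mem_zpowers _))

lemma nilpotent_of_act_subset_mul_sup_closure (hS : S.Finite) (hQS : Q = M ⊔ Subgroup.closure S)
    (hQ : ⁅Q, Q⁆ ≤ M) (hB : B * (Q : Set G) ⊆ B) (hB' : B'.Finite)
    (hact : ∀ c ∈ Y.periodizations M B, ∀ n, Y.act n c ⊆ B' * Q) :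
    ∀ c ∈ Y.periodizations M B, Y.Nilpotent c := by
  have hSQ : S ⊆ Q := by
    rw [hQS]
    exact Subgroup.subset_closure.trans (SetLike.coe_subset_coe.2 le_sup_right)
  refine Y.nilpotent_of_forall_exists_pow_mem hQ hB hB' hact hS hSQ le_rfl (hQS ▸ le_sup_left)
    fun V hMV hVQ hpow c hc => ?_
  have hindex : V.relIndex Q ≠ 0 := fun h =>
    relIndex_sup_closure_ne_zero hQ hS hSQ hMV hVQ hpow
      (Subgroup.relIndex_eq_zero_of_le_right (hQS ▸ sup_le_sup_right hMV _) h)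
  obtain ⟨F, hF, hFV⟩ := exists_finite_mul_eq_of_relIndex_ne_zero hVQ hindex
  obtain ⟨A, hA⟩ := hc.2.1
  refine nilpotent_of_act_subset_mul hc.1 hA.periodic (hB'.mul hF) (T := 0) fun n _ => ?_
  rw [mul_assoc, hFV]
  exact Y.act_subset_of_le (hact · · n) hMV hc

lemma exists_finite_act_subset_mul_of_le {B₁ B₂ : Set G} (hB₁ : B₁.Finite) (hB₂ : B₂.Finite)
    (L : Subgroup G) :
    ∃ S : Set G, S.Finite ∧ S ⊆ L ∧ ∀ Q ≤ L, S ⊆ Q → ∀ c ∈ Y.adm, support c ⊆ B₁ * Q →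
      (∀ n, Y.act n c ⊆ B₂ * L) → ∀ n, Y.act n c ⊆ B₂ * Q := by
  obtain ⟨F₀, hF₀, hF₀_act⟩ := Y.exists_finite_act_subset_mul_support 0
  obtain ⟨F₁, hF₁, hF₁_act⟩ := Y.exists_finite_act_succ_subset
  refine ⟨(B₂⁻¹ * (F₀ * B₁) ∪ B₂⁻¹ * (F₁ * B₂)) ∩ L, ((hB₂.inv.mul (hF₀.mul hB₁)).union
    (hB₂.inv.mul (hF₁.mul hB₂))).inter_of_left _, inter_subset_right,
    fun Q hQL hSQ c hc hsupp hact n => ?_⟩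
  rw [union_inter_distrib_right, union_subset_iff] at hSQ
  induction n with
  | zero =>
    refine (subset_inter (hact 0) ?_).trans (mul_inter_mul_subset hQL hSQ.1)
    rw [mul_assoc]
    exact (hF₀_act c hc).trans (mul_subset_mul_left hsupp)
  | succ n ih =>
    refine (subset_inter (hact (n + 1)) ?_).trans (mul_inter_mul_subset hQL hSQ.2)
    rw [mul_assoc]
    exact (hF₁_act c n).trans (mul_subset_mul_left ih)

lemma nilpotent_of_directed {ι : Type*} [Nonempty ι] {V : ι → Subgroup G}
    (hV : Directed (· ≥ ·) V) (hVM : ⨅ i, V i = M) [M.Normal] [L.Normal] (hL : ⁅L, L⁆ ≤ M)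
    (hVL : ∀ i, V i ≤ L) (hindex : ∀ i, (V i).relIndex L ≠ 0)
    (hnil : ∀ i, ∀ c ∈ Y.periodizations (V i) univ, Y.Nilpotent c)
    (hc : c ∈ Y.periodizations M univ) : Y.Nilpotent c := by
  obtain ⟨A, hA⟩ := hc.2.1
  obtain ⟨B₂, hB₂, hB₂_act⟩ := Y.exists_finite_act_subset_mul_of_directed (L := L) (K := ⊤) hV hVL
    hindex le_top (by rw [hVM, Subgroup.normalizer_eq_top]) (by rw [Subgroup.normalizer_eq_top])
    (subset_univ _) hnil (finite_singleton 1) (fun c _ n g _ => by simp) hA.finite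
  rw [hVM] at hB₂_act
  obtain ⟨S, hS, hSL, hS_act⟩ := Y.exists_finite_act_subset_mul_of_le hA.finite hB₂ L
  set Q := M ⊔ Subgroup.closure S
  have hML : M ≤ L := hVM ▸ (iInf_le V (Classical.arbitrary ι)).trans (hVL _)
  have hQL : Q ≤ L := sup_le hML ((Subgroup.closure_le L).2 hSL)
  have hSQ : S ⊆ Q := Subgroup.subset_closure.trans (SetLike.coe_subset_coe.2 le_sup_right)
  refine Y.nilpotent_of_act_subset_mul_sup_closure (B := A * Q) hS rfl
    ((Subgroup.commutator_mono hQL hQL).trans hL) ?_ hB₂ (fun c hc n => ?_) c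
    ⟨hc.1, hc.2.1, hA.support_eq.trans_subset (mul_subset_mul_left ?_)⟩
  · rw [mul_assoc, coe_mul_coe]
  · exact hS_act Q hQL hSQ c hc.1 hc.2.2 (hB₂_act c
      (FiniteTypeShift.periodizations_mono (subset_univ _) hc)
      (hc.2.2.trans (mul_subset_mul_left hQL))) n
  · exact SetLike.coe_subset_coe.2 le_sup_left

end GroupInduction

end SymbolicModel

section ProfiniteClosure

variable {G : Type*} [Group G] {D D' : Subgroup G}

/-- The closure of a subgroup in the profinite topology of the group. -/
def profiniteClosure (D : Subgroup G) : Subgroup G :=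
  ⨅ N : FiniteIndexNormalSubgroup G, D ⊔ N.toSubgroup

lemma le_profiniteClosure : D ≤ profiniteClosure D :=
  le_iInf fun _ => le_sup_left

lemma profiniteClosure_mono (h : D ≤ D') : profiniteClosure D ≤ profiniteClosure D' :=
  iInf_mono fun N => sup_le_sup_right h N.toSubgroup

instance [D.Normal] : (profiniteClosure D).Normal :=
  Subgroup.normal_iInf_normal fun N => Subgroup.sup_normal D N.toSubgroup

lemma profiniteClosure_bot [Group.ResiduallyFinite G] : profiniteClosure (⊥ : Subgroup G) = ⊥ := by
  simpa only [profiniteClosure, bot_sup_eq] using Group.residuallyFinite_def.1 inferInstance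

lemma commutator_profiniteClosure_le :
    ⁅profiniteClosure D, profiniteClosure D⁆ ≤ profiniteClosure ⁅D, D⁆ := by
  refine le_iInf fun N => ?_
  let π := QuotientGroup.mk' N.toSubgroup
  have comap_map (K : Subgroup G) : (K.map π).comap π = K ⊔ N.toSubgroup := by
    rw [Subgroup.comap_map_eq, QuotientGroup.ker_mk']
  have hle : (profiniteClosure D).map π ≤ D.map π :=
    Subgroup.map_le_iff_le_comap.2 (comap_map D ▸ iInf_le _ N)
  rw [← comap_map, ← Subgroup.map_le_iff_le_comap, Subgroup.map_commutator,
    Subgroup.map_commutator]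
  exact Subgroup.commutator_mono hle hle

lemma group_residuallyFinite {G : Type} [Group G] (h : ResiduallyFinite G) :
    Group.ResiduallyFinite G := by
  refine Group.residuallyFinite_iff_exists_finiteIndexNormalSubgroup.2 fun g hg => ?_
  obtain ⟨Q, _, φ, _, hφ⟩ := h g hg
  exact ⟨.ofSubgroup φ.ker, hφ⟩

lemma relIndex_ne_zero_of_finiteIndex (H L : Subgroup G) [H.FiniteIndex] : H.relIndex L ≠ 0 :=
  Subgroup.FiniteIndex.index_ne_zero (H := H.subgroupOf L)

end ProfiniteClosure

lemma isPeriodic_bot {G α : Type*} [Group G] (c : G → α) : IsPeriodic ⊥ c := fun u hu => by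
  rw [Subgroup.mem_bot.1 hu]
  exact funext fun g => congrArg c (mul_one g)

lemma FiniteTypeShift.mem_periodizations_bot {G α : Type*} [Group G] [Zero α]
    {Y : FiniteTypeShift G α} {c : G → α} (hc : c ∈ Y.adm) (hfin : (support c).Finite) :
    c ∈ Y.periodizations ⊥ univ :=
  ⟨hc, ⟨support c, hfin, isPeriodic_bot c, by simp, fun _ _ _ _ _ _ _ hv _ hv' _ =>
    (Subgroup.mem_bot.1 hv).trans (Subgroup.mem_bot.1 hv').symm⟩, subset_univ _⟩

namespace SymbolicModel

section VirtuallySolvable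

variable {G α X : Type*} [Group G] [Zero α] [MetricSpace X] [Zero X]
  [MulAction G X] [ContinuousConstSMul G X] {Δ : ℝ} {f : X → X} (Y : SymbolicModel G α Δ f)
  {c : G → α}

lemma nilpotent_of_isPeriodic {U : Subgroup G} [U.FiniteIndex]
    (hc : c ∈ Y.adm) (hU : IsPeriodic U c) : Y.Nilpotent c := by
  obtain ⟨Q, hQ, hQU⟩ := exists_finite_mul_eq_of_relIndex_ne_zero (le_top : U ≤ ⊤)
    (U.relIndex_top_right ▸ Subgroup.FiniteIndex.index_ne_zero)
  exact nilpotent_of_act_subset_mul hc hU hQ (T := 0) fun n _ => by simp [hQU]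

variable [CompactSpace X]

lemma nilpotent_of_mem_periodizations_profiniteClosure_commutator {D : Subgroup G} [D.Normal]
    (hnil : ∀ N : FiniteIndexNormalSubgroup G,
      ∀ c ∈ Y.periodizations (profiniteClosure D ⊓ N.toSubgroup) univ, Y.Nilpotent c)
    (N : FiniteIndexNormalSubgroup G)
    (hc : c ∈ Y.periodizations (profiniteClosure ⁅D, D⁆ ⊓ N.toSubgroup) univ) :
    Y.Nilpotent c := by
  let L := profiniteClosure D ⊓ N.toSubgroup
  have : Nonempty (FiniteIndexNormalSubgroup G) := ⟨N⟩
  have hiInf : ⨅ N' : FiniteIndexNormalSubgroup G, L ⊓ (⁅D, D⁆ ⊔ N'.toSubgroup) =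
      profiniteClosure ⁅D, D⁆ ⊓ N.toSubgroup := by
    rw [← inf_iInf, inf_right_comm]
    exact congrArg (· ⊓ _)
      (inf_eq_right.2 (profiniteClosure_mono (Subgroup.commutator_le_left D D)))
  have hle (N' : FiniteIndexNormalSubgroup G) :
      L ⊓ N'.toSubgroup ≤ L ⊓ (⁅D, D⁆ ⊔ N'.toSubgroup) := inf_le_inf_left L le_sup_right
  have hindex (N' : FiniteIndexNormalSubgroup G) : (L ⊓ N'.toSubgroup).relIndex L ≠ 0 := by
    rw [Subgroup.inf_relIndex_left]
    exact relIndex_ne_zero_of_finiteIndex _ _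
  refine Y.nilpotent_of_directed (L := L) (fun N₁ N₂ => ⟨N₁ ⊓ N₂, ?_, ?_⟩) hiInf ?_
    (fun _ => inf_le_left)
    (fun N' h => hindex N' (Subgroup.relIndex_eq_zero_of_le_left (hle N') h))
    (fun N' c hc => hnil (N ⊓ N') c ?_) hc
  · exact inf_le_inf_left L (sup_le_sup_left inf_le_left _)
  · exact inf_le_inf_left L (sup_le_sup_left inf_le_right _)
  · exact le_inf ((Subgroup.commutator_mono inf_le_left inf_le_left).trans
      commutator_profiniteClosure_le) ((Subgroup.commutator_mono inf_le_right inf_le_right).trans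
      (Subgroup.commutator_le_left _ _))
  · have : profiniteClosure D ⊓ (N ⊓ N').toSubgroup = L ⊓ N'.toSubgroup := (inf_assoc ..).symm
    rw [this]
    exact FiniteTypeShift.periodizations_subset_of_relIndex_ne_zero (hle N')
      (fun h => hindex N' (Subgroup.relIndex_eq_zero_of_le_right inf_le_left h)) hc

theorem nilpotent_of_finite_support [Group.ResiduallyFinite G] (K : Subgroup G) [K.FiniteIndex]
    [Group.IsSolvable K] (hc : c ∈ Y.adm) (hfin : (support c).Finite) : Y.Nilpotent c := by
  have hsolvable : Group.IsSolvable K.normalCore :=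
    Group.isSolvable_of_isSolvable_injective (Subgroup.inclusion_injective K.normalCore_le)
  obtain ⟨d, hd⟩ := hsolvable.solvable
  have hnil (n : ℕ) : ∀ N : FiniteIndexNormalSubgroup G, ∀ c ∈ Y.periodizations
      (profiniteClosure ((derivedSeries K.normalCore n).map K.normalCore.subtype) ⊓ N.toSubgroup)
      univ, Y.Nilpotent c := by
    induction n with
    | zero =>
      rintro N c ⟨hc, ⟨A, hA⟩, -⟩
      rw [derivedSeries_zero, ← MonoidHom.range_eq_map, Subgroup.range_subtype] at hA
      have := Subgroup.finiteIndex_of_le (le_profiniteClosure (D := K.normalCore))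
      exact Y.nilpotent_of_isPeriodic hc hA.periodic
    | succ n ih =>
      rw [derivedSeries_succ, Subgroup.map_commutator]
      exact fun N c => Y.nilpotent_of_mem_periodizations_profiniteClosure_commutator ih N
  refine hnil d (.ofSubgroup ⊤) c ?_
  rw [hd, Subgroup.map_bot, profiniteClosure_bot, bot_inf_eq]
  exact FiniteTypeShift.mem_periodizations_bot hc hfin

end VirtuallySolvable

end SymbolicModel

section Shadowing

variable {G X : Type*} [Group G] [MetricSpace X] [MulAction G X] {S : Set G} {δ ε : ℝ} {x y : X}
  {c c' : G → X}

/-- A `δ`-pseudo-orbit for the generators `S`. -/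
def IsPseudoOrbit (S : Set G) (δ : ℝ) (c : G → X) : Prop :=
  ∀ g, ∀ s ∈ S, dist (s • c g) (c (s * g)) < δ

/-- The orbit of `y` is uniformly `ε`-close to `c`. -/
def Shadows (ε : ℝ) (y : X) (c : G → X) : Prop := ∀ g, dist (c g) (g • y) < ε

lemma IsPseudoOrbit.shift (hc : IsPseudoOrbit S δ c) (k : G) : IsPseudoOrbit S δ (shift k c) :=
  fun g s hs => by
    have := hc (g * k) s hs
    rwa [← mul_assoc] at this

lemma Shadows.shift (h : Shadows ε y c) (k : G) : Shadows ε (k • y) (shift k c) := fun g => by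
  rw [← mul_smul]
  exact h (g * k)

lemma Shadows.dist_smul_lt (h : Shadows (ε / 2) x c) (h' : Shadows (ε / 2) y c') {g : G}
    (hg : c g = c' g) : dist (g • x) (g • y) < ε := by
  have := dist_triangle_left (g • x) (g • y) (c g)
  have h₁ := h g
  have h₂ := h' g
  rw [← hg] at h₂
  linarith

variable [Zero X] {Δ : ℝ} {f : X → X} {D F : Set G}

open Classical in
/-- The orbit of `x` with the points far, as measured by `D`, from every active position
replaced by `0`. -/
noncomputable def truncate (D : Set G) (Δ : ℝ) (x : X) : G → X := fun g =>
  if g ∈ D * activeSet G Δ x then g • x else 0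

lemma truncate_of_mem {g : G} (h : g ∈ D * activeSet G Δ x) : truncate D Δ x g = g • x :=
  if_pos h

lemma truncate_of_notMem {g : G} (h : g ∉ D * activeSet G Δ x) : truncate D Δ x g = 0 :=
  if_neg h

lemma support_truncate_subset : support (truncate D Δ x) ⊆ D * activeSet G Δ x :=
  fun _ hg => by_contra fun h => hg (truncate_of_notMem h)

lemma mem_mul_activeSet_smul {g k : G} :
    g ∈ D * activeSet G Δ (k • x) ↔ g * k ∈ D * activeSet G Δ x := by
  constructor
  · rintro ⟨d, hd, a, ha, rfl⟩
    exact ⟨d, hd, a * k, mem_activeSet_smul.1 ha, (mul_assoc d a k).symm⟩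
  · rintro ⟨d, hd, a, ha, hda⟩
    refine ⟨d, hd, a * k⁻¹, mem_activeSet_smul.2 (by rwa [inv_mul_cancel_right]), ?_⟩
    change d * a = g * k at hda
    change d * (a * k⁻¹) = g
    rw [← mul_assoc, hda, mul_inv_cancel_right]

lemma truncate_smul (k : G) (x : X) : truncate D Δ (k • x) = shift k (truncate D Δ x) := by
  funext g
  by_cases h : g ∈ D * activeSet G Δ (k • x)
  · rw [truncate_of_mem h, shift, truncate_of_mem (mem_mul_activeSet_smul.1 h), mul_smul]
  · rw [truncate_of_notMem h, shift, truncate_of_notMem (mt mem_mul_activeSet_smul.2 h)]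

lemma shadows_truncate (hF : ∀ g ∉ F * activeSet G Δ x, dist (g • x) 0 < ε) (hFD : F ⊆ D)
    (hε : 0 < ε) : Shadows ε x (truncate D Δ x) := fun g => by
  by_cases hg : g ∈ D * activeSet G Δ x
  · rwa [truncate_of_mem hg, dist_self]
  · rw [truncate_of_notMem hg, dist_comm]
    exact hF g fun hgF => hg (mul_subset_mul_right hFD hgF)

namespace IsAsymptoticallyNilpotent

variable (h : IsAsymptoticallyNilpotent G Δ f)
include h

lemma eq_of_shadows (hx : Shadows (Δ / 2) x c) (hy : Shadows (Δ / 2) y c) : x = y :=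
  h.expansive x y fun _ => (hx.dist_smul_lt hy rfl).le

lemma isPseudoOrbit_truncate (hδ : 0 < δ) (hF : ∀ g ∉ F * activeSet G Δ x, dist (g • x) 0 < δ)
    (hFD : F ⊆ D) (hSFD : S⁻¹ * F ⊆ D) : IsPseudoOrbit S δ (truncate D Δ x) := fun g s hs => by
  by_cases hsg : s * g ∈ D * activeSet G Δ x
  · rw [truncate_of_mem hsg]
    by_cases hg : g ∈ D * activeSet G Δ x
    · rwa [truncate_of_mem hg, ← mul_smul, dist_self]
    · rw [truncate_of_notMem hg, h.smul_zero, dist_comm]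
      refine hF (s * g) fun hsgF => hg (mul_subset_mul_right hSFD ?_)
      rw [mul_assoc]
      exact ⟨s⁻¹, inv_mem_inv.2 hs, s * g, hsgF, inv_mul_cancel_left s g⟩
  · rw [truncate_of_notMem hsg]
    by_cases hg : g ∈ D * activeSet G Δ x
    · rw [truncate_of_mem hg, ← mul_smul]
      exact hF (s * g) fun hsgF => hsg (mul_subset_mul_right hFD hsgF)
    · rwa [truncate_of_notMem hg, h.smul_zero, dist_self]

lemma isPseudoOrbit_zero (hδ : 0 < δ) : IsPseudoOrbit S δ (0 : G → X) := fun g s _ => by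
  rwa [Pi.zero_apply, Pi.zero_apply, h.smul_zero, dist_self]

variable [CompactSpace X] [ContinuousConstSMul G X]

lemma exists_finite_isPseudoOrbit_truncate (hS : S.Finite) (hδ : 0 < δ) (hε : 0 < ε) :
    ∃ D : Set G, D.Finite ∧
      ∀ x : X, IsPseudoOrbit S δ (truncate D Δ x) ∧ Shadows ε x (truncate D Δ x) := by
  obtain ⟨F, hF, hFη⟩ := h.exists_finite_dist_smul_lt (lt_min hδ hε)
  refine ⟨F ∪ S⁻¹ * F, hF.union (hS.inv.mul hF), fun x => ⟨?_, ?_⟩⟩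
  · exact h.isPseudoOrbit_truncate hδ (fun g hg => (hFη x g hg).trans_le (min_le_left _ _))
      subset_union_left subset_union_right
  · exact shadows_truncate (fun g hg => (hFη x g hg).trans_le (min_le_right _ _))
      subset_union_left hε

theorem nonempty_symbolicModel (hS : S.Finite) (hδ : 0 < δ)
    (hshadow : ∀ c : G → X, IsPseudoOrbit S δ c → ∃ y, Shadows (Δ / 2) y c) :
    Nonempty (SymbolicModel G X Δ f) := by
  obtain ⟨D, hD, htruncate⟩ := h.exists_finite_isPseudoOrbit_truncate hS hδ (half_pos h.pos)
  choose! decode hdecode using hshadow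
  exact ⟨{
    adm := {c | IsPseudoOrbit S δ c}
    window := insert 1 S
    finite_window := hS.insert 1
    one_mem_window := mem_insert 1 S
    zero_mem := h.isPseudoOrbit_zero hδ
    shift_mem := fun k _ hc => hc.shift k
    glue := fun x hx g s hs => by
      obtain ⟨c, hc, hxc⟩ := hx g
      have hxg := hxc 1 (mem_insert 1 S)
      rw [one_mul] at hxg
      rw [hxg, hxc s (mem_insert_of_mem 1 hs)]
      exact hc g s hs
    endo := h
    decode := decode
    decode_shift := fun c hc k =>
      h.eq_of_shadows (hdecode _ (hc.shift k)) ((hdecode c hc).shift k)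
    exists_finite_dist_decode_lt := fun η hη => by
      obtain ⟨K, hK, hdist⟩ := exists_finite_dist_lt_of_expansive h.expansive hη
      exact ⟨K, hK, fun c hc c' hc' heq => hdist _ _ fun g hg =>
        ((hdecode c hc).dist_smul_lt (hdecode c' hc') (heq hg)).le⟩
    encode := truncate D Δ
    encode_mem := fun x => (htruncate x).1
    decode_encode := fun x => h.eq_of_shadows (hdecode _ (htruncate x).1) (htruncate x).2
    encode_smul := truncate_smul
    radius := D
    finite_radius := hD
    support_encode_subset := fun x => support_truncate_subset }⟩

end IsAsymptoticallyNilpotent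

end Shadowing

section Conclusion

variable {G X : Type*} [Group G] [MetricSpace X] [Zero X] [MulAction G X] {Δ : ℝ} {f : X → X}

namespace SymbolicModel

variable {α : Type*} [Zero α] (Y : SymbolicModel G α Δ f)

lemma act_encode (n : ℕ) (x : X) : Y.act n (Y.encode x) = activeSet G Δ (f^[n] x) := by
  rw [act, Y.decode_encode]

variable [CompactSpace X] [ContinuousConstSMul G X]

lemma exists_finite_activeSet_iterate_add_subset
    (hnil : ∀ c ∈ Y.adm, (support c).Finite → Y.Nilpotent c) :
    ∃ E : Set G, E.Finite ∧ ∃ N, ∀ x : X, (activeSet G Δ x).Finite → ∀ n ≥ N, ∀ j,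
      activeSet G Δ (f^[n + j] x) ⊆ E * activeSet G Δ (f^[j] x) := by
  obtain ⟨E, hE, N, hact⟩ := Y.exists_finite_act_add_inter_subset ⊥ (finite_singleton 1)
  refine ⟨E, hE, N, fun x hx n hn j => ?_⟩
  have hfin : (support (Y.encode x)).Finite :=
    (Y.finite_radius.mul hx).subset (Y.support_encode_subset x)
  obtain ⟨F, hF, hFact⟩ := Y.exists_finite_act_subset_mul_support j
  have := hact (Y.encode x) (Y.encode_mem x) (isPeriodic_bot _) (hnil _ (Y.encode_mem x) hfin) j
    ⟨_, hF.mul hfin, by simpa using hFact _ (Y.encode_mem x)⟩ n hn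
  rw [Subgroup.normalizer_eq_top] at this
  simpa [act_encode] using this

end SymbolicModel

variable [CompactSpace X] [ContinuousConstSMul G X]

theorem IsAsymptoticallyNilpotent.exists_iterate_eq_zero (h : IsAsymptoticallyNilpotent G Δ f)
    (hdense : Dense {x : X | (activeSet G Δ x).Finite}) {E : Set G} (hE : E.Finite) {N : ℕ}
    (hact : ∀ x : X, (activeSet G Δ x).Finite → ∀ n ≥ N, ∀ j,
      activeSet G Δ (f^[n + j] x) ⊆ E * activeSet G Δ (f^[j] x)) :
    ∃ n, ∀ x, f^[n] x = 0 := by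
  obtain ⟨n, hn⟩ := h.exists_forall_exists_disjoint_activeSet hE.inv
  have hclosed : IsClosed {x : X | dist (f^[N + n] x) 0 ≤ Δ / 2} :=
    isClosed_le ((h.continuous.iterate _).dist continuous_const) continuous_const
  have hsmall (x : X) : dist (f^[N + n] x) 0 ≤ Δ / 2 := by
    refine hclosed.closure_subset_iff.2 (fun z hz => ?_) (hdense x)
    obtain ⟨j, hj, hdisj⟩ := hn z
    have hone : (1 : G) ∉ activeSet G Δ (f^[N + n] z) := fun hone => by
      rw [show N + n = N + (n - j) + j by omega] at hone
      obtain ⟨e, he, a, ha, hea⟩ := hact z hz _ (Nat.le_add_right _ _) j hone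
      rw [eq_inv_of_mul_eq_one_right hea] at ha
      exact disjoint_left.1 hdisj (inv_mem_inv.2 he) ha
    rwa [notMem_activeSet, one_smul] at hone
  refine ⟨N + n, fun x => (h.activeSet_eq_empty_iff (G := G)).1 ?_⟩
  refine eq_empty_of_forall_notMem fun g => notMem_activeSet.2 ?_
  rw [← h.iterate_smul]
  exact hsmall (g • x)

end Conclusion

lemma Homoclinic.finite_activeSet {G X : Type} [Group G] [MetricSpace X] [MulAction G X] [Zero X]
    {Δ : ℝ} (hΔ : 0 < Δ) {x : X} (hx : Homoclinic G 0 x) : (activeSet G Δ x).Finite := by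
  obtain ⟨E, hE⟩ := hx _ (half_pos hΔ)
  exact E.finite_toSet.subset fun g hg => by_contra fun hgE => lt_asymm hg (hE g hgE)

theorem statement12_general {G X : Type} [Group G] [MetricSpace X] [CompactSpace X]
    [MulAction G X] (hcont : ∀ g : G, Continuous fun x : X => g • x)
    (x₀ : X) (hx₀ : ∀ g : G, g • x₀ = x₀) (hRF : ResiduallyFinite G)
    (hVS : ∃ H : Subgroup G, H.FiniteIndex ∧ Group.IsSolvable H)
    {Δ : ℝ} (hΔ : 0 < Δ) (hexp : ∀ x y : X, (∀ g : G, dist (g • x) (g • y) ≤ Δ) → x = y)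
    (hshadow : ∃ S : Finset G, ∃ δ > 0, ∀ c : G → X,
      IsPseudoOrbit (S : Set G) δ c → ∃ y, Shadows (Δ / 2) y c)
    (hhomo : Dense {x : X | Homoclinic G x₀ x}) {f : X → X} (hf : Continuous f) (hf₀ : f x₀ = x₀)
    (hfeq : ∀ (g : G) (x : X), f (g • x) = g • f x)
    (hAN : ∀ x : X, Tendsto (fun n => f^[n] x) atTop (𝓝 x₀)) :
    ∃ n : ℕ, ∀ x : X, f^[n] x = x₀ := by
  let _ : Zero X := ⟨x₀⟩
  have : ContinuousConstSMul G X := ⟨hcont⟩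
  have : Group.ResiduallyFinite G := group_residuallyFinite hRF
  obtain ⟨K, _, _⟩ := hVS
  obtain ⟨S, δ, hδ, hshadow⟩ := hshadow
  have h : IsAsymptoticallyNilpotent G Δ f := ⟨hΔ, hx₀, hexp, hf, hf₀, hfeq, hAN⟩
  obtain ⟨Y⟩ := h.nonempty_symbolicModel S.finite_toSet hδ hshadow
  obtain ⟨E, hE, N, hact⟩ := Y.exists_finite_activeSet_iterate_add_subset
    fun c hc hfin => Y.nilpotent_of_finite_support K hc hfin
  exact h.exists_iterate_eq_zero (hhomo.mono fun x hx => hx.finite_activeSet hΔ) hE hact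

/-- Let `G` be a finitely generated residually finite virtually
solvable group, and `(G, X, 0)` an expansive pointed dynamical system with the
shadowing property (for some finite generating set) and dense homoclinic points.
Then every asymptotically nilpotent endomorphism is nilpotent. -/
theorem statement12 {G X : Type} [Group G] [MetricSpace X] [CompactSpace X]
    [MulAction G X]
    (hcont : ∀ g : G, Continuous fun x : X => g • x)
    (x₀ : X) (hx₀ : ∀ g : G, g • x₀ = x₀)
    (hFG : Group.FG G) (hRF : ResiduallyFinite G)
    (hVS : ∃ H : Subgroup G, H.FiniteIndex ∧ IsSolvable H)
    (hexp : ∃ Δ : ℝ, 0 < Δ ∧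
      ∀ x y : X, (∀ g : G, dist (g • x) (g • y) ≤ Δ) → x = y)
    (hshadow : ∃ S : Finset G, Subgroup.closure (S : Set G) = ⊤ ∧
      ∀ ε : ℝ, 0 < ε → ∃ δ : ℝ, 0 < δ ∧
        ∀ c : G → X, (∀ (g : G), ∀ s ∈ S, dist (s • c g) (c (s * g)) < δ) →
          ∃ y : X, ∀ g : G, dist (c g) (g • y) < ε)
    (hhomo : Dense {x : X | Homoclinic G x₀ x})
    (f : X → X) (hf : Continuous f) (hf₀ : f x₀ = x₀)
    (hfeq : ∀ (g : G) (x : X), f (g • x) = g • f x)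
    (hAN : ∀ x : X, Filter.Tendsto (fun n => f^[n] x) Filter.atTop (nhds x₀)) :
    ∃ n : ℕ, ∀ x : X, f^[n] x = x₀ := by
  obtain ⟨Δ, hΔ, hexp⟩ := hexp
  exact statement12_general hcont x₀ hx₀ hRF hVS hΔ hexp
    (hshadow.imp fun S hS => hS.2 (Δ / 2) (half_pos hΔ)) hhomo hf hf₀ hfeq hAN
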